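/- arXiv:1104.0324 — 2 statements merged into one kernel-verified Lean document; each statement's English description precedes it below -/
import Mathlib

section
/- Assume q ≡ 3 (mod 4), and let Ĵ ∈ F^I be the all-one vector (the sum of all basis vectors e_p). Then Ker(φ) is the internal direct sum of the one-dimensional trivial F[H]-submodule spanned by Ĵ and (q-3)/4 F[H]-submodules M_1, …, M_{(q-3)/4} which are pairwise non-isomorphic simple F[H]-modules, each of F-dimension q+1. -/
/-!
Write `q = 4m + 3` and `n = (q-1)/2 = 2m + 1`, which is odd.  As `-1` is a nonsquare, an internal
point has a unique representative `(x,y,z)` with `xz - y² = 1` and `x` a square; it is viewed as the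
anisotropic binary form `p(a,c) = x a² + 2 y a c + z c²`, and `H` acts by substitution, up to a sign.
Let `χ` be a character of the multiplicative group of the field, with values in `F`, of order `n`
and kernel `{1,-1}` (`exists_goodChar`).  For a nonzero vector `ξ`, the function
`f_{k,ξ}(p) = χ(p(ξ))^k` does not see the sign, and `H` permutes the `f_{k,ξ}` (`actF_fch`).  The
summands are the spans `N_k` of the `f_{k,ξ}` for `0 ≤ k ≤ m`, where `N_0` is spanned by `Ĵ`.

*Duality.*  With respect to the standard bilinear form, `f_{k,ξ}` and `f_{n-k',η}` are orthogonal
whenever `k ≠ k'`, and for `0 < k ≤ m` the families `f_{k,ξ}` and `f_{n-k,ξ}`, with `ξ` on the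
projective line, are dual bases (`pair_dual`, `orth`).  Hence `dim N_k = q + 1` for `0 < k ≤ m`, and
the sum of the `N_k` is direct.

*Simplicity.*  The Borel subgroup acts regularly on internal points, so the projection
`∑_b χ(b)^k b` is `w ↦ ⟨w, f_{n-k,(1,0)}⟩ f_{k,(1,0)}` (`Pop_eq`).  A nonzero submodule of `N_k`
pairs nontrivially with a translate of `f_{n-k,(1,0)}`, hence contains `f_{k,(1,0)}` and all its
translates (`Nk_simple`).  An isomorphism from `N_k` to `N_k'` commutes with this projection, which
vanishes on `N_k'` but not on `N_k` (`Nk_not_iso`).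

*The kernel.*  `φ` kills each `f_{k,ξ}`, as the sum involved is invariant under a reflection
(`phi_fch`).  Conversely `w + φ²(w)` lies in `⨆ N_k` for every `w` (`add_phi_phi_mem`), and on
`Ker φ` this vector is `w`.  By transitivity it is enough to check the base point `o = (1,0,1)`,
where `e_o + φ²(e_o)` equals `Ĵ + ∑_{0<k≤m} ∑_ξ χ(o(ξ))^{-k} f_{k,ξ}` (`base_identity`).  At a point
`r ≠ o` both sides detect whether the line `or` meets the conic: the left one because `o` and `r`
have an internal common conjugate point exactly when it does not, the right one because
`∑_{0<k≤m} (χ(c)^k + χ(c)^{-k}) = 1` for `c` distinct from `0`, `1`, `-1`, applied to the degenerate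
members of the pencil spanned by the two forms.
-/

open scoped Classical

noncomputable section

namespace ConicPaper

variable (K : Type) [Field K] [Fintype K]

/-- Points (and also lines, via homogeneous coordinates) of `PG(2,q)`. -/
abbrev Pt := Projectivization K (Fin 3 → K)

instance : Fintype (Pt K) := @Fintype.ofFinite _ (Quotient.finite _)

/-- `a` is a nonsquare in `K`. -/
def Nonsq (a : K) : Prop := ¬ IsSquare a

/-- The quadratic form `Q(x0,x1,x2) = x1^2 - x0*x2` defining the conic. -/
def Qf (v : Fin 3 → K) : K := v 1 ^ 2 - v 0 * v 2

/-- A point is internal when `Q` of (a representative of) it is a nonsquare. -/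
def Internal (p : Pt K) : Prop := Nonsq K (Qf K p.rep)

/-- A point is external when `Q` of it is a nonzero square. -/
def External (p : Pt K) : Prop := Qf K p.rep ≠ 0 ∧ IsSquare (Qf K p.rep)

/-- The point `p` lies on the line `ℓ = [b0,b1,b2]`. -/
def OnL (p ℓ : Pt K) : Prop :=
  p.rep 0 * ℓ.rep 0 + p.rep 1 * ℓ.rep 1 + p.rep 2 * ℓ.rep 2 = 0

/-- Discriminant `b1^2 - 4 b0 b2` of a line. -/
def lineDisc (ℓ : Pt K) : K := ℓ.rep 1 ^ 2 - 4 * ℓ.rep 0 * ℓ.rep 2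

/-- A line is a passant when its discriminant is a nonsquare. -/
def Passant (ℓ : Pt K) : Prop := Nonsq K (lineDisc K ℓ)

/-- A line is a secant when its discriminant is a nonzero square. -/
def Secant (ℓ : Pt K) : Prop := lineDisc K ℓ ≠ 0 ∧ IsSquare (lineDisc K ℓ)

/-- The incidence pairing of the vector `w` with the polar line
`p^⊥ = [z, -2y, x]` of the point `p = (x,y,z)`. -/
def perpDot (p : Pt K) (w : Fin 3 → K) : K :=
  w 0 * p.rep 2 + w 1 * (-2 * p.rep 1) + w 2 * p.rep 0

/-- The point `r` lies on the passant line `p^⊥`. -/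
def OnPerp (p r : Pt K) : Prop := perpDot K p r.rep = 0

/-- The (finite) set `I` of internal points, as a type. -/
abbrev Ipts := {p : Pt K // Internal K p}

instance : Fintype (Ipts K) := Fintype.ofFinite _

/-- The action of a (nonsingular) matrix `M` on points of `PG(2,q)`:
`p ↦ p·M`.  (If `p.rep ᵥ* M` were zero -- impossible for invertible `M` --
we return `p`, making the function total.) -/
def actPt (M : Matrix (Fin 3) (Fin 3) K) (p : Pt K) : Pt K :=
  if h : Matrix.vecMul p.rep M ≠ 0 then Projectivization.mk K (Matrix.vecMul p.rep M) h else p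

/-- The group `H ≅ PSL(2,q)`, given by its set of matrix representatives. -/
def Hset : Set (Matrix (Fin 3) (Fin 3) K) :=
  {M | ∃ a b c d : K, a * d - b * c = 1 ∧
    M = !![a^2, a*b, b^2; 2*a*c, a*d + b*c, 2*b*d; c^2, c*d, d^2]}

/-- An algebraic closure `F` of `F_2`. -/
abbrev F2bar := AlgebraicClosure (ZMod 2)

/-- The incidence matrix `A`, regarded over `F`. -/
def AmatF : Matrix (Ipts K) (Ipts K) F2bar :=
  Matrix.of fun p r => if OnPerp K p.1 r.1 then 1 else 0

/-- The map `φ : F^I → F^I`, `e_p ↦ ∑_{r ∈ I, r on p^⊥} e_r`; its matrix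
with respect to the standard basis is `A`. -/
def phi : (Ipts K → F2bar) →ₗ[F2bar] (Ipts K → F2bar) :=
  Matrix.vecMulLinear (AmatF K)

/-- The permutation matrix (over `F`) of the action of `M ∈ H` on `I`. -/
def actMat (M : Matrix (Fin 3) (Fin 3) K) : Matrix (Ipts K) (Ipts K) F2bar :=
  Matrix.of fun p r => if actPt K M p.1 = r.1 then 1 else 0

/-- The action of `M ∈ H` on `F^I`, extending `e_p ↦ e_{p^M}` linearly. -/
def actF (M : Matrix (Fin 3) (Fin 3) K) :
    (Ipts K → F2bar) →ₗ[F2bar] (Ipts K → F2bar) :=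
  Matrix.vecMulLinear (actMat K M)

/-- `W` is an `F[H]`-submodule of `F^I` (an `H`-stable subspace). -/
def HStable (W : Submodule F2bar (Ipts K → F2bar)) : Prop :=
  ∀ M ∈ Hset K, ∀ x ∈ W, actF K M x ∈ W

/-- `W` is a simple `F[H]`-module: it is nonzero and has no `H`-stable
subspace other than `⊥` and itself. -/
def HSimple (W : Submodule F2bar (Ipts K → F2bar)) : Prop :=
  W ≠ ⊥ ∧ ∀ W' : Submodule F2bar (Ipts K → F2bar), W' ≤ W → HStable K W' → W' = ⊥ ∨ W' = W

/-- `W` and `W'` are isomorphic as `F[H]`-modules: there is an `F`-linear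
equivalence commuting with the `H`-action. -/
def HIso (W W' : Submodule F2bar (Ipts K → F2bar)) : Prop :=
  ∃ e : W ≃ₗ[F2bar] W', ∀ M ∈ Hset K, ∀ x : W,
    ∀ h : actF K M (x : Ipts K → F2bar) ∈ W,
      ((e ⟨actF K M (x : Ipts K → F2bar), h⟩ : W') : Ipts K → F2bar) =
        actF K M ((e x : W') : Ipts K → F2bar)

/-- The all-one vector `Ĵ ∈ F^I`. -/
def Jvec : Ipts K → F2bar := fun _ => 1


set_option linter.unusedSectionVars false

section Prelim

variable {K}

/-! ### Squares and nonsquares when `q ≡ 3 (mod 4)` -/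

lemma neg_one_not_sq (h3 : Fintype.card K % 4 = 3) : ¬ IsSquare (-1 : K) := by
  rw [FiniteField.isSquare_neg_one_iff]; simpa using h3

lemma two_ne (h3 : Fintype.card K % 4 = 3) : (2 : K) ≠ 0 := by
  intro h
  apply neg_one_not_sq h3
  have : (-1 : K) = 1 := by linear_combination -h
  rw [this]; exact IsSquare.one

lemma isSq_neg_of_not (h3 : Fintype.card K % 4 = 3) {a : K} (ha : ¬ IsSquare a) :
    IsSquare (-a) := by
  have h1 := quadraticChar_neg_one_iff_not_isSquare.mpr ha
  have h2 := quadraticChar_neg_one_iff_not_isSquare.mpr (neg_one_not_sq h3)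
  have ha0 : a ≠ 0 := by rintro rfl; exact ha IsSquare.zero
  rw [← quadraticChar_one_iff_isSquare (neg_ne_zero.mpr ha0), neg_eq_neg_one_mul, map_mul, h1, h2]
  norm_num

lemma not_sq_neg (h3 : Fintype.card K % 4 = 3) {a : K} (ha0 : a ≠ 0) (ha : IsSquare a) :
    ¬ IsSquare (-a) := by
  intro h
  apply neg_one_not_sq h3
  have : (-1 : K) = -a / a := by field_simp
  rw [this]; exact h.div ha

/-- A sum of two squares vanishes only trivially, since `-1` is a nonsquare. -/
lemma sq_add_sq_ne (h3 : Fintype.card K % 4 = 3) {a b : K} (h : a ^ 2 + b ^ 2 = 0) :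
    a = 0 ∧ b = 0 := by
  by_cases hb : b = 0
  · subst hb; simpa using h
  · exfalso
    apply neg_one_not_sq h3
    refine ⟨a / b, ?_⟩
    field_simp
    linear_combination -h

/-! ### Normalised representatives of internal points -/

/-- The binary quadratic form `v₀ a² + 2 v₁ a c + v₂ c²` attached to a coordinate vector. -/
def fm (v : Fin 3 → K) (a c : K) : K := v 0 * a ^ 2 + 2 * v 1 * a * c + v 2 * c ^ 2

/-- The polar form of the conic: `r` lies on `p^⊥` iff it vanishes on representatives. -/
def tt (v w : Fin 3 → K) : K := v 0 * w 2 + v 2 * w 0 - 2 * v 1 * w 1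

/-- A coordinate vector is normalised when its form has determinant `1` and its
leading coefficient is a square.  Each internal point has exactly one normalised representative. -/
def IsN (v : Fin 3 → K) : Prop := v 0 * v 2 - v 1 ^ 2 = 1 ∧ IsSquare (v 0)

lemma IsN.ne (h3 : Fintype.card K % 4 = 3) {v : Fin 3 → K} (h : IsN v) : v 0 ≠ 0 := by
  intro h0
  apply neg_one_not_sq h3
  exact ⟨v 1, by have := h.1; rw [h0] at this; linear_combination this⟩

lemma IsN.ne0 {v : Fin 3 → K} (h : IsN v) : v ≠ 0 := by
  rintro rfl
  simpa using h.1

lemma IsN.uniq (h3 : Fintype.card K % 4 = 3) {v w : Fin 3 → K} (hv : IsN v) (hw : IsN w)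
    {c : K} (h : w = c • v) : w = v := by
  have e : ∀ i, w i = c * v i := fun i => by rw [h]; rfl
  have hc : c ^ 2 = 1 := by
    have := hw.1
    rw [e, e, e] at this
    linear_combination this - c ^ 2 * hv.1
  rcases (show c = 1 ∨ c = -1 from by simpa using hc) with rfl | rfl
  · simpa using h
  · exfalso
    refine not_sq_neg h3 (hv.ne h3) hv.2 ?_
    have := hw.2
    rw [e] at this
    simpa using this

lemma isN_of_fst_snd (h3 : Fintype.card K % 4 = 3) {v w : Fin 3 → K} (hv : IsN v) (hw : IsN w)
    (h0 : v 0 = w 0) (h1 : v 1 = w 1) : v = w := by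
  have h2 : v 2 = w 2 := by
    apply mul_left_cancel₀ (hv.ne h3)
    have a := hv.1
    have b := hw.1
    rw [← h0, ← h1] at b
    linear_combination a - b
  ext i; fin_cases i <;> assumption

lemma exists_nv (h3 : Fintype.card K % 4 = 3) (p : Ipts K) :
    ∃ v : Fin 3 → K, IsN v ∧ ∃ c : K, c ≠ 0 ∧ v = c • p.1.rep := by
  obtain ⟨e, he⟩ := isSq_neg_of_not h3 p.2
  have hQ : p.1.rep 1 ^ 2 - p.1.rep 0 * p.1.rep 2 = -(e * e) := by
    rw [← he]; simp [Qf]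
  have he0 : e ≠ 0 := by
    rintro rfl
    apply p.2
    have : Qf K p.1.rep = 0 := by simpa using he
    rw [this]; exact IsSquare.zero
  have key : ∀ c : K, c ^ 2 * e ^ 2 = 1 → IsSquare (c * p.1.rep 0) → IsN (c • p.1.rep) := by
    intro c hc hs
    refine ⟨?_, by simpa using hs⟩
    simp only [Pi.smul_apply, smul_eq_mul]
    linear_combination hc - c ^ 2 * hQ
  by_cases hs : IsSquare (e⁻¹ * p.1.rep 0)
  · exact ⟨_, key e⁻¹ (by field_simp) hs, e⁻¹, inv_ne_zero he0, rfl⟩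
  · refine ⟨_, key (-e⁻¹) (by field_simp) ?_, -e⁻¹, neg_ne_zero.mpr (inv_ne_zero he0), rfl⟩
    rw [neg_mul]; exact isSq_neg_of_not h3 hs

/-- The normalised representative of an internal point. -/
def nv (h3 : Fintype.card K % 4 = 3) (p : Ipts K) : Fin 3 → K := (exists_nv h3 p).choose

lemma nv_isN (h3 : Fintype.card K % 4 = 3) (p : Ipts K) : IsN (nv h3 p) :=
  (exists_nv h3 p).choose_spec.1

lemma nv_smul (h3 : Fintype.card K % 4 = 3) (p : Ipts K) :
    ∃ c : K, c ≠ 0 ∧ nv h3 p = c • p.1.rep :=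
  (exists_nv h3 p).choose_spec.2

lemma mk_nv (h3 : Fintype.card K % 4 = 3) (p : Ipts K) :
    Projectivization.mk K (nv h3 p) (nv_isN h3 p).ne0 = p.1 := by
  obtain ⟨c, hc, h⟩ := nv_smul h3 p
  conv_rhs => rw [← p.1.mk_rep]
  rw [Projectivization.mk_eq_mk_iff']
  exact ⟨c, h.symm⟩

lemma nv_inj (h3 : Fintype.card K % 4 = 3) {p r : Ipts K} (h : nv h3 p = nv h3 r) : p = r := by
  apply Subtype.ext
  rw [← mk_nv h3 p, ← mk_nv h3 r]
  simp only [h]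

lemma nv_eq_of_mk (h3 : Fintype.card K % 4 = 3) {v : Fin 3 → K} (hv : IsN v) (p : Ipts K)
    (h : Projectivization.mk K v hv.ne0 = p.1) : nv h3 p = v := by
  rw [← mk_nv h3 p, Projectivization.mk_eq_mk_iff'] at h
  obtain ⟨c, hc⟩ := h
  exact ((nv_isN h3 p).uniq h3 hv hc.symm).symm

lemma internal_mk (h3 : Fintype.card K % 4 = 3) {v : Fin 3 → K} (hv : IsN v) :
    Internal K (Projectivization.mk K v hv.ne0) := by
  obtain ⟨a, ha⟩ := Projectivization.exists_smul_eq_mk_rep K v hv.ne0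
  rintro ⟨b, hb⟩
  rw [← ha] at hb
  simp only [Qf, Pi.smul_apply, Units.smul_def, smul_eq_mul] at hb
  apply neg_one_not_sq h3
  refine ⟨b / a, ?_⟩
  have := a.ne_zero
  field_simp
  linear_combination (a : K) ^ 2 * hv.1 + hb

lemma exists_nv_eq (h3 : Fintype.card K % 4 = 3) {v : Fin 3 → K} (hv : IsN v) :
    ∃ p : Ipts K, nv h3 p = v :=
  ⟨⟨_, internal_mk h3 hv⟩, nv_eq_of_mk h3 hv _ rfl⟩

lemma onPerp_iff (h3 : Fintype.card K % 4 = 3) (p r : Ipts K) :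
    OnPerp K p.1 r.1 ↔ tt (nv h3 p) (nv h3 r) = 0 := by
  obtain ⟨c, hc, h⟩ := nv_smul h3 p
  obtain ⟨d, hd, h'⟩ := nv_smul h3 r
  rw [h, h', OnPerp]
  have : tt (c • p.1.rep) (d • r.1.rep) = c * d * perpDot K p.1 r.1.rep := by
    simp only [tt, perpDot, Pi.smul_apply, smul_eq_mul]; ring
  rw [this]
  simp [hc, hd]

/-- A normalised form is anisotropic. -/
lemma IsN.fm_ne (h3 : Fintype.card K % 4 = 3) {v : Fin 3 → K} (hv : IsN v) {a c : K}
    (h : a ≠ 0 ∨ c ≠ 0) : fm v a c ≠ 0 := by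
  have h0 := hv.ne h3
  have key : v 0 * fm v a c = (v 0 * a + v 1 * c) ^ 2 + c ^ 2 := by
    simp only [fm]; linear_combination c ^ 2 * hv.1
  intro hz
  rw [hz, mul_zero] at key
  obtain ⟨h1, h2⟩ := sq_add_sq_ne h3 key.symm
  subst h2
  simp [h0] at h1
  simp [h1] at h

/-! ### The action of `H` on internal points -/

/-- The element of `H` attached to `a, b, c, d`. -/
def Mh (a b c d : K) : Matrix (Fin 3) (Fin 3) K :=
  !![a^2, a*b, b^2; 2*a*c, a*d + b*c, 2*b*d; c^2, c*d, d^2]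

lemma vecMul_Mh (v : Fin 3 → K) (a b c d : K) :
    Matrix.vecMul v (Mh a b c d) = ![fm v a c, v 0 * a * b + v 1 * (a * d + b * c) + v 2 * c * d,
      fm v b d] := by
  ext i
  fin_cases i <;> simp [Matrix.vecMul, dotProduct, Fin.sum_univ_three, Mh, fm] <;> ring

lemma fm_vecMul (v : Fin 3 → K) (a b c d s t : K) :
    fm (Matrix.vecMul v (Mh a b c d)) s t = fm v (a * s + b * t) (c * s + d * t) := by
  rw [vecMul_Mh]; simp [fm]; ring

lemma tt_vecMul (v w : Fin 3 → K) {a b c d : K} (h : a * d - b * c = 1) :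
    tt (Matrix.vecMul v (Mh a b c d)) (Matrix.vecMul w (Mh a b c d)) = tt v w := by
  have : tt (Matrix.vecMul v (Mh a b c d)) (Matrix.vecMul w (Mh a b c d)) =
      (a * d - b * c) ^ 2 * tt v w := by
    rw [vecMul_Mh, vecMul_Mh]; simp [fm, tt]; ring
  rw [this, h]; ring

lemma det_vecMul (v : Fin 3 → K) {a b c d : K} (h : a * d - b * c = 1) :
    Matrix.vecMul v (Mh a b c d) 0 * Matrix.vecMul v (Mh a b c d) 2
      - Matrix.vecMul v (Mh a b c d) 1 ^ 2 = v 0 * v 2 - v 1 ^ 2 := by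
  have := tt_vecMul v v h
  rw [vecMul_Mh] at *
  simp only [tt, fm, Matrix.cons_val] at *
  have e : (a * d - b * c) ^ 2 * (v 0 * v 2 - v 1 ^ 2) = v 0 * v 2 - v 1 ^ 2 := by rw [h]; ring
  linear_combination e

/-- The image `p^M` is internal; its normalised representative is `± nv p · M`. -/
lemma exists_actI (h3 : Fintype.card K % 4 = 3) (p : Ipts K) {a b c d : K}
    (h : a * d - b * c = 1) :
    ∃ r : Ipts K, actPt K (Mh a b c d) p.1 = r.1 ∧
      ∃ ε : K, (ε = 1 ∨ ε = -1) ∧ nv h3 r = ε • Matrix.vecMul (nv h3 p) (Mh a b c d) := by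
  have hd := det_vecMul (nv h3 p) h
  rw [(nv_isN h3 p).1] at hd
  obtain ⟨ε, hε, hN⟩ : ∃ ε : K, (ε = 1 ∨ ε = -1) ∧
      IsN (ε • Matrix.vecMul (nv h3 p) (Mh a b c d)) := by
    by_cases hs : IsSquare (Matrix.vecMul (nv h3 p) (Mh a b c d) 0)
    · refine ⟨1, Or.inl rfl, ?_, ?_⟩
      · simpa using hd
      · simpa using hs
    · refine ⟨-1, Or.inr rfl, ?_, ?_⟩
      · simpa using hd
      · simpa using isSq_neg_of_not h3 hs
  have hε0 : ε ≠ 0 := by rcases hε with rfl | rfl <;> simp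
  refine ⟨⟨_, internal_mk h3 hN⟩, ?_, ε, hε, nv_eq_of_mk h3 hN _ rfl⟩
  obtain ⟨c', hc', hcr⟩ := nv_smul h3 p
  have hne : Matrix.vecMul p.1.rep (Mh a b c d) ≠ 0 := by
    intro hz
    apply hN.ne0
    rw [hcr, Matrix.smul_vecMul, hz]; simp
  rw [actPt, dif_pos hne, Projectivization.mk_eq_mk_iff']
  refine ⟨(ε * c')⁻¹, ?_⟩
  rw [hcr, Matrix.smul_vecMul, smul_smul, smul_smul, mul_assoc, inv_mul_cancel₀ (mul_ne_zero hε0 hc'),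
    one_smul]

/-- The permutation of the internal points induced by an element of `H`. -/
def actI (h3 : Fintype.card K % 4 = 3) {a b c d : K} (h : a * d - b * c = 1) (p : Ipts K) :
    Ipts K := (exists_actI h3 p h).choose

lemma actI_spec (h3 : Fintype.card K % 4 = 3) {a b c d : K} (h : a * d - b * c = 1)
    (p : Ipts K) : actPt K (Mh a b c d) p.1 = (actI h3 h p).1 :=
  (exists_actI h3 p h).choose_spec.1

lemma nv_actI (h3 : Fintype.card K % 4 = 3) {a b c d : K} (h : a * d - b * c = 1)
    (p : Ipts K) : ∃ ε : K, (ε = 1 ∨ ε = -1) ∧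
      nv h3 (actI h3 h p) = ε • Matrix.vecMul (nv h3 p) (Mh a b c d) :=
  (exists_actI h3 p h).choose_spec.2

lemma fm_actI (h3 : Fintype.card K % 4 = 3) {a b c d : K} (h : a * d - b * c = 1)
    (p : Ipts K) (s t : K) :
    fm (nv h3 (actI h3 h p)) s t = fm (nv h3 p) (a * s + b * t) (c * s + d * t) ∨
    fm (nv h3 (actI h3 h p)) s t = -fm (nv h3 p) (a * s + b * t) (c * s + d * t) := by
  obtain ⟨ε, hε, e⟩ := nv_actI h3 h p
  rw [e, ← fm_vecMul]
  rcases hε with rfl | rfl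
  · left; simp
  · right; simp [fm]; ring

lemma tt_actI (h3 : Fintype.card K % 4 = 3) {a b c d : K} (h : a * d - b * c = 1)
    (p r : Ipts K) : tt (nv h3 (actI h3 h p)) (nv h3 (actI h3 h r)) = 0 ↔
      tt (nv h3 p) (nv h3 r) = 0 := by
  obtain ⟨ε, hε, e⟩ := nv_actI h3 h p
  obtain ⟨δ, hδ, e'⟩ := nv_actI h3 h r
  have : tt (nv h3 (actI h3 h p)) (nv h3 (actI h3 h r)) = ε * δ * tt (nv h3 p) (nv h3 r) := by
    rw [e, e', ← tt_vecMul (nv h3 p) (nv h3 r) h]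
    simp only [tt, Pi.smul_apply, smul_eq_mul]; ring
  rw [this]
  rcases hε with rfl | rfl <;> rcases hδ with rfl | rfl <;> simp

/-- The inverse matrix is `Mh d (-b) (-c) a`. -/
lemma vecMul_Mh_inv (v : Fin 3 → K) {a b c d : K} (h : a * d - b * c = 1) :
    Matrix.vecMul (Matrix.vecMul v (Mh a b c d)) (Mh d (-b) (-c) a) = v := by
  have e : Matrix.vecMul (Matrix.vecMul v (Mh a b c d)) (Mh d (-b) (-c) a) =
      (a * d - b * c) ^ 2 • v := by
    rw [vecMul_Mh, vecMul_Mh]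
    ext i
    fin_cases i <;> simp [fm] <;> ring
  rw [e, h]; simp

lemma actI_bij (h3 : Fintype.card K % 4 = 3) {a b c d : K} (h : a * d - b * c = 1) :
    Function.Bijective (actI h3 h) := by
  rw [← Finite.injective_iff_bijective]
  intro p r hpr
  obtain ⟨ε, hε, e⟩ := nv_actI h3 h p
  obtain ⟨δ, hδ, e'⟩ := nv_actI h3 h r
  rw [← hpr, e] at e'
  have e2 := congrArg (fun w => Matrix.vecMul w (Mh d (-b) (-c) a)) e'
  simp only [Matrix.smul_vecMul, vecMul_Mh_inv _ h] at e2
  apply nv_inj h3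
  apply ((nv_isN h3 r).uniq h3 (nv_isN h3 p) (c := ε * δ) ?_)
  rw [mul_smul, ← e2, smul_smul]
  rcases hε with rfl | rfl <;> simp

lemma actF_apply (h3 : Fintype.card K % 4 = 3) {a b c d : K} (h : a * d - b * c = 1)
    (x : Ipts K → F2bar) (p : Ipts K) : actF K (Mh a b c d) x (actI h3 h p) = x p := by
  simp only [actF, Matrix.vecMulLinear_apply, Matrix.vecMul, dotProduct, actMat, Matrix.of_apply,
    actI_spec h3 h, mul_ite, mul_one, mul_zero]
  rw [Finset.sum_eq_single p]
  · simp
  · intro r _ hr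
    rw [if_neg]
    intro he
    exact hr ((actI_bij h3 h).1 (Subtype.ext he))
  · simp

/-! ### Sums over internal points -/

/-- The nonzero squares of `K`. -/
abbrev SqT (K : Type) [Field K] := {x : K // x ≠ 0 ∧ IsSquare x}

/-- The normalised vector with given leading coefficient and middle coefficient. -/
def vec (x y : K) : Fin 3 → K := ![x, y, (1 + y ^ 2) / x]

lemma vec_isN (x : SqT K) (y : K) : IsN (vec x.1 y) := by
  have := x.2.1
  refine ⟨?_, x.2.2⟩
  simp [vec]
  field_simp
  ring

/-- Internal points are parametrised by a nonzero square and an element of `K`. -/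
lemma sum_I (h3 : Fintype.card K % 4 = 3) (G : (Fin 3 → K) → F2bar) :
    ∑ p : Ipts K, G (nv h3 p) = ∑ x : SqT K, ∑ y : K, G (vec x.1 y) := by
  rw [← Fintype.sum_prod_type' (f := fun (x : SqT K) (y : K) => G (vec x.1 y))]
  refine Fintype.sum_bijective
    (fun p => ((⟨nv h3 p 0, (nv_isN h3 p).ne h3, (nv_isN h3 p).2⟩ : SqT K), nv h3 p 1)) ?_ _ _ ?_
  · constructor
    · intro p r hpr
      simp only [Prod.mk.injEq, Subtype.mk.injEq] at hpr
      exact nv_inj h3 (isN_of_fst_snd h3 (nv_isN h3 p) (nv_isN h3 r) hpr.1 hpr.2)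
    · rintro ⟨x, y⟩
      obtain ⟨p, hp⟩ := exists_nv_eq h3 (vec_isN x y)
      refine ⟨p, ?_⟩
      simp [hp, vec]
  · intro p
    congr 1
    exact isN_of_fst_snd h3 (nv_isN h3 p) (vec_isN ⟨nv h3 p 0, (nv_isN h3 p).ne h3, (nv_isN h3 p).2⟩ _)
      (by simp [vec]) (by simp [vec])

/-- In characteristic two, the sum of an even function over `K` is its value at `0`. -/
lemma sum_even (h3 : Fintype.card K % 4 = 3) (g : K → F2bar) (hg : ∀ y, g (-y) = g y) :
    ∑ y : K, g y = g 0 := by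
  rw [← Finset.add_sum_erase _ _ (Finset.mem_univ (0 : K))]
  have : ∑ y ∈ Finset.univ.erase (0 : K), g y = 0 := by
    refine Finset.sum_involution (fun y _ => -y) ?_ ?_ ?_ ?_
    · intro y _; rw [hg]; exact CharTwo.add_self_eq_zero _
    · intro y hy _ h
      have hy0 : y ≠ 0 := by simpa using hy
      have : 2 * y = 0 := by linear_combination -h
      simp [two_ne h3, hy0] at this
    · intro y hy; simpa using hy
    · intro y _; simp
  rw [this, add_zero]

end Prelim

section Characters

variable {K}

/-! ### A character of `Kˣ` of order `(q-1)/2` -/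

/-- `χ` is a multiplicative character of order `n` whose kernel is `{1, -1}`. -/
structure GoodChar (χ : MulChar K F2bar) (n : ℕ) : Prop where
  pow_eq : ∀ x, x ≠ 0 → χ x ^ n = 1
  ker : ∀ x, x ≠ 0 → χ x = 1 → x = 1 ∨ x = -1
  dvd : ∀ k : ℕ, (∀ x, x ≠ 0 → χ x ^ k = 1) → n ∣ k

lemma exists_goodChar (h3 : Fintype.card K % 4 = 3) :
    ∃ χ : MulChar K F2bar, GoodChar χ ((Fintype.card K - 1) / 2) := by
  set n := (Fintype.card K - 1) / 2 with hn
  have h2n : Fintype.card K - 1 = n * 2 := by omega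
  have hodd : n % 2 = 1 := by omega
  have : NeZero ((n : ℕ) : ZMod 2) := by
    constructor
    rw [Ne, ZMod.natCast_eq_zero_iff]
    omega
  obtain ⟨ζ, hζ⟩ := HasEnoughRootsOfUnity.exists_primitiveRoot F2bar n
  obtain ⟨χ, hχ⟩ := MulChar.exists_mulChar_orderOf K (n := n) ⟨2, h2n⟩ hζ
  obtain ⟨g, hg⟩ := IsCyclic.exists_generator (α := Kˣ)
  have hpow : ∀ (k : ℕ), χ (g : K) ^ k = 1 → n ∣ k := by
    intro k hk
    rw [← hχ, orderOf_dvd_iff_pow_eq_one, MulChar.eq_iff hg, MulChar.pow_apply_coe, hk]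
    simp
  refine ⟨χ, ?_, ?_, ?_⟩
  · intro x hx
    have : (χ ^ n) (Units.mk0 x hx : K) = 1 := by
      rw [← hχ, pow_orderOf_eq_one, MulChar.one_apply_coe]
    rw [MulChar.pow_apply_coe] at this
    simpa using this
  · intro x hx h1
    obtain ⟨i, hi⟩ := (mem_powers_iff_mem_zpowers.mpr (hg (Units.mk0 x hx)))
    have hxi : x = (g : K) ^ i := by
      have := congrArg (fun u : Kˣ => (u : K)) hi
      simpa using this.symm
    rw [hxi, map_pow] at h1
    obtain ⟨j, rfl⟩ := hpow i h1
    have : x ^ 2 = 1 := by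
      rw [hxi, ← pow_mul, show n * j * 2 = (n * 2) * j by ring, ← h2n, pow_mul,
        FiniteField.pow_card_sub_one_eq_one _ g.ne_zero, one_pow]
    simpa using this
  · intro k hk
    exact hpow k (hk _ g.ne_zero)

variable {χ : MulChar K F2bar} {n : ℕ}

lemma sq_eq_one_F {a : F2bar} (h : a ^ 2 = 1) : a = 1 := by
  rcases (show a = 1 ∨ a = -1 by simpa using h) with h | h
  · exact h
  · rw [h, CharTwo.neg_eq]

lemma chi_neg (x : K) : χ (-x) = χ x := by
  have : χ (-1) = 1 := by
    apply sq_eq_one_F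
    rw [← map_pow]; simp
  rw [neg_eq_neg_one_mul, map_mul, this, one_mul]

/-- Inversion of the group of nonzero squares has the single fixed point `1`, so this group has
odd order. -/
lemma sum_one_sq (h3 : Fintype.card K % 4 = 3) : ∑ _x : SqT K, (1 : F2bar) = 1 := by
  let o : SqT K := ⟨1, one_ne_zero, IsSquare.one⟩
  rw [← Finset.add_sum_erase _ _ (Finset.mem_univ o)]
  have : ∑ y ∈ Finset.univ.erase o, (1 : F2bar) = 0 := by
    refine Finset.sum_involution
      (fun y _ => (⟨y.1⁻¹, inv_ne_zero y.2.1, y.2.2.inv⟩ : SqT K)) ?_ ?_ ?_ ?_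
    · intro y _; exact CharTwo.add_self_eq_zero _
    · intro y hy _ h
      have hy1 : y ≠ o := by simpa using hy
      have h' : y.1⁻¹ = y.1 := congrArg Subtype.val h
      have hy0 := y.2.1
      have : y.1 ^ 2 = 1 := by
        field_simp at h'
        exact h'.symm
      have h4 : y.1 = 1 ∨ y.1 = -1 := by simpa using this
      rcases h4 with h4 | h4
      · exact hy1 (Subtype.ext h4)
      · exact neg_one_not_sq h3 (h4 ▸ y.2.2)
    · intro y hy
      have hy1 : y ≠ o := by simpa using hy
      simp only [Finset.mem_erase, Finset.mem_univ, and_true]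
      intro h
      have h' : y.1⁻¹ = 1 := congrArg Subtype.val h
      exact hy1 (Subtype.ext (by simpa using h'))
    · intro y _; simp
  rw [this, add_zero]

lemma sum_chi_one (h3 : Fintype.card K % 4 = 3) (hχ : GoodChar χ n) {k : ℕ} (hk : n ∣ k) :
    ∑ x : SqT K, χ x.1 ^ k = 1 := by
  obtain ⟨j, rfl⟩ := hk
  rw [← sum_one_sq h3]
  refine Finset.sum_congr rfl fun x _ => ?_
  rw [pow_mul, hχ.pow_eq _ x.2.1, one_pow]

lemma sum_chi_zero (hχ : GoodChar χ n) {k : ℕ} (hk : ¬ n ∣ k) :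
    ∑ x : SqT K, χ x.1 ^ k = 0 := by
  obtain ⟨a, ha0, ha⟩ : ∃ a : K, a ≠ 0 ∧ χ a ^ k ≠ 1 := by
    by_contra! hc
    exact hk (hχ.dvd k hc)
  have e : ∑ x : SqT K, χ x.1 ^ k = (χ a ^ k) ^ 2 * ∑ x : SqT K, χ x.1 ^ k := by
    rw [Finset.mul_sum]
    refine (Fintype.sum_bijective (fun x : SqT K => (⟨a ^ 2 * x.1,
      mul_ne_zero (pow_ne_zero 2 ha0) x.2.1, (IsSquare.sq a).mul x.2.2⟩ : SqT K)) ?_ _ _ ?_).symm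
    · rw [← Finite.injective_iff_bijective]
      intro x y hxy
      have : a ^ 2 * x.1 = a ^ 2 * y.1 := congrArg Subtype.val hxy
      exact Subtype.ext (mul_left_cancel₀ (pow_ne_zero 2 ha0) this)
    · intro x
      simp only [map_mul, map_pow]
      ring
  have hne : (χ a ^ k) ^ 2 ≠ 1 := fun h => ha (sq_eq_one_F h)
  have : (1 - (χ a ^ k) ^ 2) * ∑ x : SqT K, χ x.1 ^ k = 0 := by linear_combination e
  rcases mul_eq_zero.mp this with h | h
  · exact absurd (sub_eq_zero.mp h).symm hne
  · exact h

/-! ### The functions `p ↦ χ(p(ξ))^k` and their pairings -/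

/-- The function `p ↦ χ(p(s,t))^k` on internal points, where `p(s,t)` is the value at `(s,t)` of the
form of `p`.  The sign ambiguity of the form is invisible to `χ`. -/
def fch (h3 : Fintype.card K % 4 = 3) (χ : MulChar K F2bar) (k : ℕ) (s t : K) :
    Ipts K → F2bar := fun p => χ (fm (nv h3 p) s t) ^ k

/-- The standard bilinear form on functions on internal points. -/
def pair (w f : Ipts K → F2bar) : F2bar := ∑ p, w p * f p

lemma actF_fch (h3 : Fintype.card K % 4 = 3) {a b c d : K} (h : a * d - b * c = 1) (k : ℕ)
    (s t : K) : actF K (Mh a b c d) (fch h3 χ k s t) =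
      fch h3 χ k (d * s - b * t) (-c * s + a * t) := by
  ext r
  obtain ⟨p, rfl⟩ := (actI_bij h3 h).2 r
  rw [actF_apply h3 h]
  simp only [fch]
  have e : χ (fm (nv h3 (actI h3 h p)) (d * s - b * t) (-c * s + a * t)) =
      χ (fm (nv h3 p) s t) := by
    have e1 : a * (d * s - b * t) + b * (-c * s + a * t) = s := by linear_combination s * h
    have e2 : c * (d * s - b * t) + d * (-c * s + a * t) = t := by linear_combination t * h
    rcases fm_actI h3 h p (d * s - b * t) (-c * s + a * t) with h' | h'
    · rw [h', e1, e2]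
    · rw [h', e1, e2, chi_neg]
  rw [e]

lemma pair_act (h3 : Fintype.card K % 4 = 3) {a b c d : K} (h : a * d - b * c = 1)
    (w f : Ipts K → F2bar) :
    pair (actF K (Mh a b c d) w) (actF K (Mh a b c d) f) = pair w f := by
  simp only [pair]
  refine (Fintype.sum_bijective _ (actI_bij h3 h) _ _ ?_).symm
  intro p
  rw [actF_apply h3 h, actF_apply h3 h]

lemma fch_smul (h3 : Fintype.card K % 4 = 3) (k : ℕ) (e s t : K) :
    fch h3 χ k (e * s) (e * t) = (χ (e ^ 2) ^ k) • fch h3 χ k s t := by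
  ext p
  simp only [fch, Pi.smul_apply, smul_eq_mul]
  rw [← mul_pow, ← map_mul]
  congr 2
  simp only [fm]; ring

lemma exists_sl {s t : K} (h : s ≠ 0 ∨ t ≠ 0) : ∃ b d : K, s * d - b * t = 1 := by
  rcases h with h | h
  · exact ⟨0, s⁻¹, by field_simp; ring⟩
  · exact ⟨-t⁻¹, 0, by field_simp; ring⟩

lemma pair_same (h3 : Fintype.card K % 4 = 3) {s t : K} (h : s ≠ 0 ∨ t ≠ 0) (k l : ℕ) :
    pair (fch h3 χ k s t) (fch h3 χ l s t) = ∑ x : SqT K, χ x.1 ^ (k + l) := by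
  obtain ⟨b, d, hbd⟩ := exists_sl h
  rw [← pair_act h3 hbd, actF_fch h3 hbd, actF_fch h3 hbd, show d * s - b * t = 1 by linear_combination hbd,
    show -t * s + s * t = 0 by ring]
  have := sum_I h3 (fun v => χ (fm v 1 0) ^ k * χ (fm v 1 0) ^ l)
  simp only [pair, fch]
  rw [this]
  refine Finset.sum_congr rfl fun x _ => ?_
  rw [sum_even h3 _ (by intro y; simp [vec, fm])]
  simp [vec, fm, pow_add]

lemma pair_diff (h3 : Fintype.card K % 4 = 3) (hn : 0 < n) (hχ : GoodChar χ n) {s t u v : K}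
    (h : s * v - u * t ≠ 0) (k l : ℕ) :
    pair (fch h3 χ k s t) (fch h3 χ l u v) =
      χ ((s * v - u * t) ^ 2) ^ l * ∑ x : SqT K, χ x.1 ^ (k + (n - 1) * l) := by
  set δ := s * v - u * t with hδ
  have hdet : s * (v / δ) - (u / δ) * t = 1 := by
    field_simp; rw [hδ]
  rw [← pair_act h3 hdet, actF_fch h3 hdet, actF_fch h3 hdet,
    show v / δ * s - u / δ * t = 1 by linear_combination hdet,
    show -t * s + s * t = 0 by ring, show v / δ * u - u / δ * v = δ * 0 by ring,
    show -t * u + s * v = δ * 1 by rw [hδ]; ring, fch_smul]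
  have e : ∀ c : F2bar, ∀ w f : Ipts K → F2bar, pair w (c • f) = c * pair w f := by
    intro c w f
    simp only [pair, Pi.smul_apply, smul_eq_mul, Finset.mul_sum]
    exact Finset.sum_congr rfl fun p _ => by ring
  rw [e]
  congr 1
  have := sum_I h3 (fun v => χ (fm v 1 0) ^ k * χ (fm v 0 1) ^ l)
  simp only [pair, fch]
  rw [this]
  refine Finset.sum_congr rfl fun x _ => ?_
  rw [sum_even h3 _ (by intro y; simp [vec, fm])]
  have hx := hχ.pow_eq _ x.2.1
  have hinv : χ (x.1⁻¹) = χ x.1 ^ (n - 1) := by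
    have h1 : χ x.1 * χ (x.1⁻¹) = 1 := by rw [← map_mul, mul_inv_cancel₀ x.2.1, map_one]
    have h2 : χ x.1 * χ x.1 ^ (n - 1) = 1 := by
      rw [← pow_succ', Nat.sub_add_cancel hn, hx]
    have h0 : χ x.1 ≠ 0 := left_ne_zero_of_mul_eq_one h1
    exact mul_left_cancel₀ h0 (h1.trans h2.symm)
  simp [vec, fm]
  rw [hinv, pow_add, pow_mul]

end Characters

section Kernel

variable {K} {χ : MulChar K F2bar} {n : ℕ}

/-! ### The incidence map on the functions `fch` -/

lemma tt_comm (v w : Fin 3 → K) : tt v w = tt w v := by simp only [tt]; ring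

lemma phi_apply (h3 : Fintype.card K % 4 = 3) (w : Ipts K → F2bar) (r : Ipts K) :
    phi K w r = ∑ p, w p * if tt (nv h3 p) (nv h3 r) = 0 then 1 else 0 := by
  simp only [phi, Matrix.vecMulLinear_apply, Matrix.vecMul, dotProduct, AmatF, Matrix.of_apply,
    onPerp_iff h3]

lemma phi_act (h3 : Fintype.card K % 4 = 3) {a b c d : K} (h : a * d - b * c = 1)
    (w : Ipts K → F2bar) : phi K (actF K (Mh a b c d) w) = actF K (Mh a b c d) (phi K w) := by
  ext r
  obtain ⟨r, rfl⟩ := (actI_bij h3 h).2 r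
  rw [actF_apply h3 h, phi_apply h3, phi_apply h3]
  refine (Fintype.sum_bijective _ (actI_bij h3 h) _ _ ?_).symm
  intro p
  rw [actF_apply h3 h]
  simp only [tt_actI h3 h]

/-- On the polar line of an internal point, the internal points with a given leading coefficient come
in pairs. -/
lemma phi_fch_base (h3 : Fintype.card K % 4 = 3) (k : ℕ) : phi K (fch h3 χ k 1 0) = 0 := by
  ext r
  rw [phi_apply h3]
  simp only [fch]
  rw [sum_I h3 (fun v => χ (fm v 1 0) ^ k * if tt v (nv h3 r) = 0 then 1 else 0)]
  refine Finset.sum_eq_zero fun x _ => ?_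
  obtain ⟨hr, -⟩ := nv_isN h3 r
  have hr0 := (nv_isN h3 r).ne h3
  generalize nv h3 r = v at *
  have hx := x.2.1
  -- after centring the middle coefficient, incidence depends only on its square
  have key : ∀ d : K, tt (vec x.1 (d + x.1 * v 1 / v 0)) v =
      d ^ 2 * v 0 / x.1 + x.1 / v 0 + v 0 / x.1 := by
    intro d
    simp only [tt, vec, Matrix.cons_val]
    field_simp
    linear_combination (x.1 ^ 2) * hr
  rw [← Equiv.sum_comp (Equiv.addRight (x.1 * v 1 / v 0))]
  simp only [Equiv.coe_addRight, key]
  rw [sum_even h3]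
  · rw [if_neg, mul_zero]
    intro h
    have h2 : x.1 ^ 2 + v 0 ^ 2 = 0 := by
      field_simp at h
      linear_combination h
    exact hx (sq_add_sq_ne h3 h2).1
  · intro y
    simp [fm, vec]

lemma phi_fch (h3 : Fintype.card K % 4 = 3) (k : ℕ) {s t : K} (h : s ≠ 0 ∨ t ≠ 0) :
    phi K (fch h3 χ k s t) = 0 := by
  obtain ⟨b, d, hbd⟩ := exists_sl h
  have e := actF_fch (χ := χ) h3 hbd k s t
  rw [show d * s - b * t = 1 by linear_combination hbd, show -t * s + s * t = 0 by ring] at e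
  have e2 := phi_act h3 hbd (fch h3 χ k s t)
  rw [e, phi_fch_base] at e2
  ext p
  rw [← actF_apply h3 hbd (phi K _) p, ← e2]; rfl

/-! ### The square of the incidence map -/

/-- The points of the projective line, as representatives `(1,0)` and `(a,1)`. -/
def bv : Option K → K × K
  | none => (1, 0)
  | some a => (a, 1)

lemma bv_ne (o : Option K) : (bv o).1 ≠ 0 ∨ (bv o).2 ≠ 0 := by
  cases o <;> simp [bv]

/-- Modulo `2`, the number of zeros of a nonzero binary quadratic form on the projective line
is `1` if the form is degenerate and `0` otherwise. -/
lemma count_roots (h3 : Fintype.card K % 4 = 3) {v : Fin 3 → K} (hv : v ≠ 0) :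
    ∑ o : Option K, (if fm v (bv o).1 (bv o).2 = 0 then (1 : F2bar) else 0) =
      if v 1 ^ 2 - v 0 * v 2 = 0 then 1 else 0 := by
  have h2 := two_ne h3
  rw [Fintype.sum_option]
  simp only [bv, fm]
  by_cases h0 : v 0 = 0
  · by_cases h1 : v 1 = 0
    · have hv2 : v 2 ≠ 0 := by
        intro hv2
        apply hv
        ext i; fin_cases i <;> assumption
      simp [h0, h1, hv2]
    · have : ∀ a : K, (v 0 * a ^ 2 + 2 * v 1 * a * 1 + v 2 * 1 ^ 2 = 0) ↔
          a = -v 2 / (2 * v 1) := by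
        intro a
        rw [h0]
        field_simp
        constructor
        · intro h; linear_combination h
        · intro h; linear_combination h
      simp only [this]
      simp [h0, h1, CharTwo.add_self_eq_zero]
  · rw [← Equiv.sum_comp (Equiv.addRight (-v 1 / v 0))]
    have : ∀ a : K, (v 0 * (a + -v 1 / v 0) ^ 2 + 2 * v 1 * (a + -v 1 / v 0) * 1 + v 2 * 1 ^ 2 = 0)
        ↔ v 1 ^ 2 - v 0 * v 2 = v 0 ^ 2 * a ^ 2 := by
      intro a
      field_simp
      constructor
      · intro h; linear_combination -h
      · intro h; linear_combination -h
    simp only [Equiv.coe_addRight, this]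
    rw [sum_even h3 _ (by intro y; simp)]
    simp [h0]

/-- Half of the nontrivial powers of `χ`, one from each pair of mutually inverse characters. -/
def hh (χ : MulChar K F2bar) (m : ℕ) (c : K) : F2bar := ∑ j ∈ Finset.range m, χ c ^ (j + 1)

lemma hh_inv {m : ℕ} (hχ : GoodChar χ (2 * m + 1)) {c : K} (hc0 : c ≠ 0) (hc1 : c ≠ 1)
    (hc2 : c ≠ -1) : hh χ m c + hh χ m c⁻¹ = 1 := by
  have hne : χ c ≠ 1 := fun h => by rcases hχ.ker c hc0 h with h | h <;> contradiction
  have hp := hχ.pow_eq c hc0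
  have hinv : χ c * χ c⁻¹ = 1 := by rw [← map_mul, mul_inv_cancel₀ hc0, map_one]
  have h2 : hh χ m c⁻¹ = ∑ j ∈ Finset.range m, χ c ^ (m + (j + 1)) := by
    rw [hh, ← Finset.sum_range_reflect]
    refine Finset.sum_congr rfl fun j hj => ?_
    have hj' := Finset.mem_range.mp hj
    have e : χ c ^ (m - 1 - j + 1) * χ c ^ (m + (j + 1)) = 1 := by
      rw [← pow_add, show m - 1 - j + 1 + (m + (j + 1)) = 2 * m + 1 by omega, hp]
    have e2 : χ c ^ (m - 1 - j + 1) * χ c⁻¹ ^ (m - 1 - j + 1) = 1 := by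
      rw [← mul_pow, hinv, one_pow]
    exact mul_left_cancel₀ (left_ne_zero_of_mul_eq_one e) (e2.trans e.symm)
  have h3 : ∑ j ∈ Finset.range (2 * m + 1), χ c ^ j = 0 := by
    have := geom_sum_mul (χ c) (2 * m + 1)
    rw [hp, sub_self] at this
    exact (mul_eq_zero.mp this).resolve_right (sub_ne_zero.mpr hne)
  have h4 : ∑ j ∈ Finset.range (2 * m + 1), χ c ^ j = hh χ m c + hh χ m c⁻¹ + 1 := by
    rw [Finset.sum_range_succ', h2, hh, two_mul, Finset.sum_range_add]
    simp [add_assoc]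
  rw [h4] at h3
  exact CharTwo.add_eq_zero.mp h3

/-- The vector `(1,0,1)` of the base point. -/
def ov : Fin 3 → K := ![1, 0, 1]

lemma ov_isN : IsN (ov : Fin 3 → K) := by simp [IsN, ov]

lemma base_of_trace (h3 : Fintype.card K % 4 = 3) {v : Fin 3 → K} (hv : IsN v)
    (h : (v 0 + v 2) ^ 2 - 4 = 0) : v = ov := by
  have h0 : (v 0 - v 2) ^ 2 + (2 * v 1) ^ 2 = 0 := by linear_combination h - 4 * hv.1
  obtain ⟨h1, h2⟩ := sq_add_sq_ne h3 h0
  have hy : v 1 = 0 := by simpa [two_ne h3] using h2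
  have hx : v 0 ^ 2 = 1 := by
    have := hv.1
    rw [hy] at this
    linear_combination this + v 0 * h1
  have hx' : v 0 = 1 ∨ v 0 = -1 := by simpa using hx
  refine isN_of_fst_snd h3 hv ov_isN ?_ (by simp [hy, ov])
  rcases hx' with hx' | hx'
  · simp [hx', ov]
  · exact absurd (hx' ▸ hv.2) (neg_one_not_sq h3)

/-- The sum of `hh` over the quotients of a normalised form by the base form counts, modulo `2`,
whether the line through the two points is a secant. -/
lemma hh_sum (h3 : Fintype.card K % 4 = 3) {m : ℕ} (hχ : GoodChar χ (2 * m + 1))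
    {v : Fin 3 → K} (hv : IsN v) (hne : v ≠ ov) :
    ∑ o : Option K, hh χ m (fm v (bv o).1 (bv o).2 / fm ov (bv o).1 (bv o).2) =
      if IsSquare ((v 0 + v 2) ^ 2 - 4) then 1 else 0 := by
  have h2 := two_ne h3
  have step : ∀ o : Option K, hh χ m (fm v (bv o).1 (bv o).2 / fm ov (bv o).1 (bv o).2) =
      ∑ c : K, hh χ m c * if fm (v - c • ov) (bv o).1 (bv o).2 = 0 then 1 else 0 := by
    intro o
    have hq := ov_isN.fm_ne h3 (bv_ne o)
    rw [Finset.sum_eq_single (fm v (bv o).1 (bv o).2 / fm ov (bv o).1 (bv o).2)]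
    · rw [if_pos, mul_one]
      have : fm (v - (fm v (bv o).1 (bv o).2 / fm ov (bv o).1 (bv o).2) • ov) (bv o).1 (bv o).2 =
          fm v (bv o).1 (bv o).2 - (fm v (bv o).1 (bv o).2 / fm ov (bv o).1 (bv o).2)
            * fm ov (bv o).1 (bv o).2 := by
        generalize fm v (bv o).1 (bv o).2 / fm ov (bv o).1 (bv o).2 = e
        simp only [fm, Pi.sub_apply, Pi.smul_apply, smul_eq_mul]; ring
      rw [this]
      field_simp
      ring
    · intro c _ hc
      rw [if_neg, mul_zero]
      intro h
      apply hc
      rw [eq_div_iff hq]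
      simp only [fm, Pi.sub_apply, Pi.smul_apply, smul_eq_mul] at h ⊢
      linear_combination -h
    · simp
  simp only [step]
  rw [Finset.sum_comm]
  have step2 : ∀ c : K, ∑ o : Option K,
      (hh χ m c * if fm (v - c • ov) (bv o).1 (bv o).2 = 0 then (1 : F2bar) else 0) =
        if c ^ 2 - (v 0 + v 2) * c + 1 = 0 then hh χ m c else 0 := by
    intro c
    rw [← Finset.mul_sum, count_roots h3]
    · have : (v - c • ov : Fin 3 → K) 1 ^ 2
          - (v - c • ov : Fin 3 → K) 0 * (v - c • ov : Fin 3 → K) 2 =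
          -(c ^ 2 - (v 0 + v 2) * c + 1) := by
        simp only [Pi.sub_apply, Pi.smul_apply, smul_eq_mul, ov, Matrix.cons_val]
        linear_combination -hv.1
      rw [this, neg_eq_zero]
      simp
    · intro h
      exact hne (ov_isN.uniq h3 hv (sub_eq_zero.mp h))
  simp only [step2]
  split_ifs with hs
  · obtain ⟨e, he⟩ := hs
    set c := (v 0 + v 2 + e) / 2 with hc
    have hroot : c ^ 2 - (v 0 + v 2) * c + 1 = 0 := by
      rw [hc]; field_simp; linear_combination -he
    have hc0 : c ≠ 0 := by
      intro h; rw [h] at hroot; simp at hroot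
    have hc1 : c ≠ 1 := by
      intro h; rw [h] at hroot
      apply hne (base_of_trace h3 hv _)
      linear_combination (-(v 0 + v 2) - 2) * hroot
    have hc2 : c ≠ -1 := by
      intro h; rw [h] at hroot
      apply hne (base_of_trace h3 hv _)
      linear_combination (v 0 + v 2 - 2) * hroot
    have hcc : c ≠ c⁻¹ := by
      intro h
      have : c ^ 2 = 1 := by
        nth_rewrite 1 [pow_two, h]; field_simp
      rcases (show c = 1 ∨ c = -1 by simpa using this) with h | h <;> contradiction
    have hiff : ∀ d : K, d ^ 2 - (v 0 + v 2) * d + 1 = 0 ↔ d = c ∨ d = c⁻¹ := by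
      intro d
      have : d ^ 2 - (v 0 + v 2) * d + 1 = (d - c) * (d - c⁻¹) := by
        field_simp
        linear_combination d * hroot
      rw [this, mul_eq_zero, sub_eq_zero, sub_eq_zero]
    rw [← Finset.sum_filter]
    have : Finset.univ.filter (fun d : K => d ^ 2 - (v 0 + v 2) * d + 1 = 0) = {c, c⁻¹} := by
      ext d; simp [hiff]
    rw [this, Finset.sum_pair hcc, hh_inv hχ hc0 hc1 hc2]
  · refine Finset.sum_eq_zero fun c _ => ?_
    rw [if_neg]
    intro h
    apply hs
    exact ⟨2 * c - (v 0 + v 2), by linear_combination (-4) * h⟩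

/-- Two distinct internal points have a common internal conjugate point (necessarily unique)
iff the line joining them is not a secant. -/
lemma common_perp (h3 : Fintype.card K % 4 = 3) {v : Fin 3 → K} (hv : IsN v) (hne : v ≠ ov) :
    ∑ s : Ipts K, ((if tt ov (nv h3 s) = 0 then (1 : F2bar) else 0) *
      if tt (nv h3 s) v = 0 then 1 else 0) =
      if IsSquare ((v 0 + v 2) ^ 2 - 4) then 0 else 1 := by
  have h2 := two_ne h3
  have hN : (v 0 + v 2) ^ 2 - 4 = (2 * v 1) ^ 2 + (v 2 - v 0) ^ 2 := by
    linear_combination 4 * hv.1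
  have hcond : ∀ s : Ipts K, tt ov (nv h3 s) = 0 → tt (nv h3 s) v = 0 →
      nv h3 s 2 = - nv h3 s 0 ∧ nv h3 s 0 ^ 2 + nv h3 s 1 ^ 2 = -1 ∧
        nv h3 s 0 * (v 2 - v 0) = 2 * nv h3 s 1 * v 1 := by
    intro s h h'
    simp only [tt, ov, Matrix.cons_val] at h h'
    have e : nv h3 s 2 = - nv h3 s 0 := by linear_combination h
    have hd := (nv_isN h3 s).1
    rw [e] at hd h'
    exact ⟨e, by linear_combination -hd, by linear_combination h'⟩
  split_ifs with hs
  · obtain ⟨e, he⟩ := hs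
    refine Finset.sum_eq_zero fun s _ => ?_
    by_cases h : tt ov (nv h3 s) = 0
    · by_cases h' : tt (nv h3 s) v = 0
      · exfalso
        obtain ⟨-, e2, e3⟩ := hcond s h h'
        have hx := (nv_isN h3 s).ne h3
        generalize nv h3 s 0 = x at *
        generalize nv h3 s 1 = y at *
        have h5 : (e * x) ^ 2 + (2 * v 1) ^ 2 = 0 := by
          have : e ^ 2 = (2 * v 1) ^ 2 + (v 2 - v 0) ^ 2 := by rw [← hN, he]; ring
          linear_combination x ^ 2 * this + (x * (v 2 - v 0) + 2 * y * v 1) * e3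
            + 4 * v 1 ^ 2 * e2
        obtain ⟨h6, -⟩ := sq_add_sq_ne h3 h5
        have he0 : e = 0 := by simpa [hx] using h6
        exact hne (base_of_trace h3 hv (by rw [he, he0]; ring))
      · simp [h']
    · simp [h]
  · obtain ⟨e, he⟩ := isSq_neg_of_not h3 hs
    have he0 : e ≠ 0 := by
      rintro rfl
      apply hs
      rw [show (v 0 + v 2) ^ 2 - 4 = 0 by linear_combination -he]
      exact IsSquare.zero
    have hv1 : v 1 ≠ 0 := by
      intro h
      apply hs
      rw [hN, h]
      exact ⟨v 2 - v 0, by ring⟩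
    have hkN : ∀ k : K, (k = e⁻¹ ∨ k = -e⁻¹) →
        (2 * v 1 * k) ^ 2 + ((v 2 - v 0) * k) ^ 2 = -1 := by
      intro k hk
      have : k ^ 2 * (e * e) = 1 := by rcases hk with rfl | rfl <;> field_simp
      linear_combination (-k ^ 2) * hN - this - k ^ 2 * he
    obtain ⟨k, hk, hsq⟩ : ∃ k : K, (k = e⁻¹ ∨ k = -e⁻¹) ∧ IsSquare (2 * v 1 * k) := by
      by_cases hq : IsSquare (2 * v 1 * e⁻¹)
      · exact ⟨_, Or.inl rfl, hq⟩
      · refine ⟨_, Or.inr rfl, ?_⟩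
        rw [mul_neg]; exact isSq_neg_of_not h3 hq
    have hk0 : k ≠ 0 := by rcases hk with rfl | rfl <;> simp [he0]
    have hN1 : IsN ![2 * v 1 * k, (v 2 - v 0) * k, -(2 * v 1 * k)] := by
      refine ⟨?_, by simpa using hsq⟩
      simp only [Matrix.cons_val]
      linear_combination -(hkN k hk)
    obtain ⟨s, hs'⟩ := exists_nv_eq h3 hN1
    rw [Finset.sum_eq_single s]
    · rw [if_pos, if_pos, one_mul]
      · rw [hs']; simp [tt]; ring
      · rw [hs']; simp [tt, ov]
    · intro s' _ hss
      by_cases h : tt ov (nv h3 s') = 0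
      · by_cases h' : tt (nv h3 s') v = 0
        · exfalso
          apply hss
          apply nv_inj h3
          obtain ⟨-, e2, e3⟩ := hcond s' h h'
          obtain ⟨c, hc⟩ : ∃ c, nv h3 s' 0 = c * (2 * v 1 * k) :=
            ⟨nv h3 s' 0 / (2 * v 1 * k), by field_simp⟩
          have hc1 : nv h3 s' 1 = c * ((v 2 - v 0) * k) := by
            have h7 : 2 * v 1 ≠ 0 := mul_ne_zero h2 hv1
            apply mul_left_cancel₀ h7
            rw [hc] at e3
            linear_combination -e3
          refine (hN1.uniq h3 (nv_isN h3 s') (c := c) ?_).trans hs'.symm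
          ext i
          fin_cases i
          · simpa using hc
          · simpa using hc1
          · simp only [tt, ov, Matrix.cons_val] at h
            simp
            linear_combination h - hc
        · simp [h']
      · simp [h]
    · simp

end Kernel

section Modules

variable {K} {χ : MulChar K F2bar} {n : ℕ}

/-! ### The Borel subgroup acts regularly on internal points -/

/-- A square root of the leading coefficient of the normalised representative of `p`. -/
def rt (h3 : Fintype.card K % 4 = 3) (p : Ipts K) : K := (nv_isN h3 p).2.choose

lemma rt_mul (h3 : Fintype.card K % 4 = 3) (p : Ipts K) : rt h3 p * rt h3 p = nv h3 p 0 :=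
  (nv_isN h3 p).2.choose_spec.symm

lemma rt_ne (h3 : Fintype.card K % 4 = 3) (p : Ipts K) : rt h3 p ≠ 0 := by
  intro h
  apply (nv_isN h3 p).ne h3
  rw [← rt_mul h3, h, zero_mul]

/-- The upper triangular element of `H` carrying the base point `(1,0,1)` to `p`. -/
def bor (h3 : Fintype.card K % 4 = 3) (p : Ipts K) : Matrix (Fin 3) (Fin 3) K :=
  Mh (rt h3 p) (nv h3 p 1 / rt h3 p) 0 (rt h3 p)⁻¹

lemma bor_det (h3 : Fintype.card K % 4 = 3) (p : Ipts K) :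
    rt h3 p * (rt h3 p)⁻¹ - nv h3 p 1 / rt h3 p * 0 = 1 := by
  rw [mul_inv_cancel₀ (rt_ne h3 p)]; ring

/-- The permutation of the internal points induced by `bor p`. -/
def borI (h3 : Fintype.card K % 4 = 3) (p : Ipts K) : Ipts K → Ipts K := actI h3 (bor_det h3 p)

lemma nv_borI (h3 : Fintype.card K % 4 = 3) (p r : Ipts K) :
    nv h3 (borI h3 p r) 0 = nv h3 p 0 * nv h3 r 0 ∧
    nv h3 (borI h3 p r) 1 = nv h3 p 1 * nv h3 r 0 + nv h3 r 1 := by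
  obtain ⟨ε, hε, e⟩ := nv_actI h3 (bor_det h3 p) r
  have ha := rt_mul h3 p
  have h0 := rt_ne h3 p
  have e0 : Matrix.vecMul (nv h3 r) (bor h3 p) 0 = nv h3 p 0 * nv h3 r 0 := by
    rw [bor, vecMul_Mh, ← ha]; simp [fm]; ring
  have e1 : Matrix.vecMul (nv h3 r) (bor h3 p) 1 = nv h3 p 1 * nv h3 r 0 + nv h3 r 1 := by
    rw [bor, vecMul_Mh]; simp; field_simp
  rw [borI, e]
  simp only [Pi.smul_apply, smul_eq_mul]
  have hp := nv_isN h3 p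
  have hr := nv_isN h3 r
  rcases hε with rfl | rfl
  · rw [one_mul, one_mul]; exact ⟨e0, e1⟩
  · -- the sign `-1` is excluded because both leading coefficients are squares
    exfalso
    have hs := (nv_isN h3 (actI h3 (bor_det h3 p) r)).2
    rw [e] at hs
    simp only [Pi.smul_apply, smul_eq_mul, neg_mul, one_mul] at hs
    change IsSquare (-(Matrix.vecMul (nv h3 r) (bor h3 p) 0)) at hs
    rw [e0] at hs
    exact not_sq_neg h3 (mul_ne_zero (hp.ne h3) (hr.ne h3)) (hp.2.mul hr.2) hs

lemma bor_mem (h3 : Fintype.card K % 4 = 3) (p : Ipts K) : bor h3 p ∈ Hset K :=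
  ⟨_, _, _, _, bor_det h3 p, rfl⟩

/-- The operator `∑_b χ(b)^k b`, summed over the Borel subgroup. -/
def Pop (h3 : Fintype.card K % 4 = 3) (χ : MulChar K F2bar) (k : ℕ) :
    (Ipts K → F2bar) →ₗ[F2bar] (Ipts K → F2bar) :=
  ∑ p, χ (nv h3 p 0) ^ k • actF K (bor h3 p)

lemma Pop_apply (h3 : Fintype.card K % 4 = 3) (k : ℕ) (w : Ipts K → F2bar) :
    Pop h3 χ k w = ∑ p, χ (nv h3 p 0) ^ k • actF K (bor h3 p) w := by
  simp [Pop, LinearMap.sum_apply]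

/-- Since the Borel subgroup acts regularly on internal points, its `χ^k`-isotypic component in
`F^I` is a line, and `Pop` is the projection onto it. -/
lemma Pop_eq (h3 : Fintype.card K % 4 = 3) (hχ : GoodChar χ n) {k : ℕ} (hk : k ≤ n)
    (w : Ipts K → F2bar) :
    Pop h3 χ k w = pair w (fch h3 χ (n - k) 1 0) • fch h3 χ k 1 0 := by
  ext r
  rw [Pop_apply]
  simp only [Finset.sum_apply, Pi.smul_apply, smul_eq_mul, pair, Finset.sum_mul]
  have hσ : ∀ p : Ipts K, ∃ p' : Ipts K, borI h3 p p' = r := fun p => (actI_bij h3 _).2 r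
  choose σ hσ using hσ
  have hx : ∀ p, nv h3 r 0 = nv h3 p 0 * nv h3 (σ p) 0 := fun p => by
    rw [← (nv_borI h3 p (σ p)).1, hσ]
  have hy : ∀ p, nv h3 r 1 = nv h3 p 1 * nv h3 (σ p) 0 + nv h3 (σ p) 1 := fun p => by
    rw [← (nv_borI h3 p (σ p)).2, hσ]
  refine Fintype.sum_bijective σ ?_ _ _ ?_
  · rw [← Finite.injective_iff_bijective]
    intro p p' h
    have hs := (nv_isN h3 (σ p')).ne h3
    have a1 := hx p
    have a2 := hx p'
    have b1 := hy p
    have b2 := hy p'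
    rw [h] at a1 b1
    apply nv_inj h3
    refine isN_of_fst_snd h3 (nv_isN h3 p) (nv_isN h3 p') ?_ ?_
    · exact mul_right_cancel₀ hs (a1.symm.trans a2)
    · apply mul_right_cancel₀ hs
      linear_combination b2 - b1
  · intro p
    have e : actF K (bor h3 p) w r = w (σ p) := by
      rw [← actF_apply h3 (bor_det h3 p) w (σ p)]
      change _ = actF K (bor h3 p) w (borI h3 p (σ p))
      rw [hσ]
    rw [e]
    have hs := (nv_isN h3 (σ p)).ne h3
    have hp := (nv_isN h3 p).ne h3
    have h1 := hχ.pow_eq _ hs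
    have h2 : χ (nv h3 (σ p) 0) ^ (n - k) * χ (nv h3 (σ p) 0) ^ k = 1 := by
      rw [← pow_add, Nat.sub_add_cancel hk, h1]
    simp only [fch, fm]
    rw [show nv h3 r 0 * 1 ^ 2 + 2 * nv h3 r 1 * 1 * 0 + nv h3 r 2 * 0 ^ 2 =
      nv h3 p 0 * nv h3 (σ p) 0 by rw [hx p]; ring]
    rw [show nv h3 (σ p) 0 * 1 ^ 2 + 2 * nv h3 (σ p) 1 * 1 * 0 + nv h3 (σ p) 2 * 0 ^ 2 =
      nv h3 (σ p) 0 by ring, map_mul, mul_pow]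
    linear_combination (-(χ (nv h3 p 0) ^ k * w (σ p))) * h2

/-! ### The modules spanned by the functions `fch` -/

/-- The span of the functions `p ↦ χ(p(ξ))^k`, for `ξ` a nonzero vector. -/
def Nk (h3 : Fintype.card K % 4 = 3) (χ : MulChar K F2bar) (k : ℕ) :
    Submodule F2bar (Ipts K → F2bar) :=
  Submodule.span F2bar {f | ∃ s t : K, (s ≠ 0 ∨ t ≠ 0) ∧ f = fch h3 χ k s t}

lemma fch_mem (h3 : Fintype.card K % 4 = 3) (k : ℕ) {s t : K} (h : s ≠ 0 ∨ t ≠ 0) :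
    fch h3 χ k s t ∈ Nk h3 χ k := Submodule.subset_span ⟨s, t, h, rfl⟩

lemma Nk_le {h3 : Fintype.card K % 4 = 3} {k : ℕ} {W : Submodule F2bar (Ipts K → F2bar)}
    (h : ∀ s t : K, (s ≠ 0 ∨ t ≠ 0) → fch h3 χ k s t ∈ W) : Nk h3 χ k ≤ W := by
  rw [Nk, Submodule.span_le]
  rintro f ⟨s, t, hst, rfl⟩
  exact h s t hst

lemma vec_ne {a b c d s t : K} (h : a * d - b * c = 1) (hst : s ≠ 0 ∨ t ≠ 0) :
    d * s - b * t ≠ 0 ∨ -c * s + a * t ≠ 0 := by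
  by_contra! hc
  obtain ⟨h1, h2⟩ := hc
  have e1 : s = 0 := by linear_combination a * h1 + b * h2 - s * h
  have e2 : t = 0 := by linear_combination c * h1 + d * h2 - t * h
  simp [e1, e2] at hst

lemma Nk_stable (h3 : Fintype.card K % 4 = 3) (k : ℕ) : HStable K (Nk h3 χ k) := by
  rintro M ⟨a, b, c, d, h, rfl⟩ x hx
  have : Nk h3 χ k ≤ (Nk h3 χ k).comap (actF K (Mh a b c d)) := by
    apply Nk_le
    intro s t hst
    rw [Submodule.mem_comap, actF_fch h3 h]
    exact fch_mem h3 k (vec_ne h hst)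
  exact this hx

lemma Nk_eq_span (h3 : Fintype.card K % 4 = 3) (k : ℕ) :
    Nk h3 χ k = Submodule.span F2bar
      (Set.range fun o : Option K => fch h3 χ k (bv o).1 (bv o).2) := by
  apply le_antisymm
  · apply Nk_le
    intro s t hst
    by_cases ht : t = 0
    · subst ht
      have := fch_smul (χ := χ) h3 k s 1 0
      rw [mul_one, mul_zero] at this
      rw [this]
      exact Submodule.smul_mem _ _ (Submodule.subset_span ⟨none, rfl⟩)
    · have := fch_smul (χ := χ) h3 k t (s / t) 1
      rw [mul_one, mul_div_cancel₀ _ ht] at this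
      rw [this]
      exact Submodule.smul_mem _ _ (Submodule.subset_span ⟨some (s / t), rfl⟩)
  · rw [Submodule.span_le]
    rintro f ⟨o, rfl⟩
    exact fch_mem h3 k (bv_ne o)

lemma fch_zero (h3 : Fintype.card K % 4 = 3) (s t : K) : fch h3 χ 0 s t = Jvec K := by
  ext p; simp [fch, Jvec]

lemma Nk_zero (h3 : Fintype.card K % 4 = 3) :
    Nk h3 χ 0 = Submodule.span F2bar {Jvec K} := by
  apply le_antisymm
  · apply Nk_le
    intro s t _
    rw [fch_zero]
    exact Submodule.mem_span_singleton_self _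
  · rw [Submodule.span_le, Set.singleton_subset_iff, ← fch_zero (χ := χ) h3 1 0]
    exact fch_mem h3 0 (Or.inl one_ne_zero)

lemma Nk_le_ker (h3 : Fintype.card K % 4 = 3) (k : ℕ) :
    Nk h3 χ k ≤ LinearMap.ker (phi K) := by
  apply Nk_le
  intro s t hst
  exact phi_fch h3 k hst

/-! ### The kernel is spanned by these modules -/

lemma phi_phi_single (h3 : Fintype.card K % 4 = 3) {o : Ipts K} (ho : nv h3 o = ov)
    (r : Ipts K) : phi K (phi K (Pi.single o 1)) r =
      ∑ s : Ipts K, ((if tt ov (nv h3 s) = 0 then (1 : F2bar) else 0) *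
        if tt (nv h3 s) (nv h3 r) = 0 then 1 else 0) := by
  rw [phi_apply h3]
  refine Finset.sum_congr rfl fun s _ => ?_
  congr 1
  rw [phi_apply h3, Finset.sum_eq_single o]
  · rw [Pi.single_eq_same, one_mul, ho]
  · intro p _ hp
    rw [Pi.single_eq_of_ne hp, zero_mul]
  · simp

/-- `(1 + φ²) e_o`, for the base point `o`, written in terms of the functions `fch`. -/
lemma base_identity (h3 : Fintype.card K % 4 = 3) {m : ℕ} (hχ : GoodChar χ (2 * m + 1))
    {o : Ipts K} (ho : nv h3 o = ov) :
    Pi.single o 1 + phi K (phi K (Pi.single o 1)) =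
      fch h3 χ 0 1 0 + ∑ j ∈ Finset.range m, ∑ i : Option K,
        (χ (fm ov (bv i).1 (bv i).2)⁻¹ ^ (j + 1)) • fch h3 χ (j + 1) (bv i).1 (bv i).2 := by
  ext r
  have e : (fch h3 χ 0 1 0 + ∑ j ∈ Finset.range m, ∑ i : Option K,
        (χ (fm ov (bv i).1 (bv i).2)⁻¹ ^ (j + 1)) • fch h3 χ (j + 1) (bv i).1 (bv i).2) r =
      1 + ∑ i : Option K, hh χ m (fm (nv h3 r) (bv i).1 (bv i).2 / fm ov (bv i).1 (bv i).2) := by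
    rw [Finset.sum_comm]
    simp only [Pi.add_apply, Finset.sum_apply, Pi.smul_apply, smul_eq_mul, fch, pow_zero]
    congr 1
    refine Finset.sum_congr rfl fun i _ => Finset.sum_congr rfl fun j _ => ?_
    rw [div_eq_mul_inv, map_mul, mul_pow, mul_comm]
  rw [e, Pi.add_apply, phi_phi_single h3 ho]
  by_cases hr : nv h3 r = ov
  · have hro : r = o := nv_inj h3 (hr.trans ho.symm)
    subst hro
    have h1 : ∑ s : Ipts K, ((if tt ov (nv h3 s) = 0 then (1 : F2bar) else 0) *
        if tt (nv h3 s) (nv h3 r) = 0 then 1 else 0) = 0 := by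
      have := congrFun (phi_fch_base (χ := χ) h3 0) r
      rw [phi_apply h3] at this
      simp only [fch, pow_zero, one_mul, Pi.zero_apply] at this
      refine Eq.trans (Finset.sum_congr rfl fun s _ => ?_) this
      rw [hr, tt_comm ov]
      split_ifs <;> simp
    have h2 : ∑ i : Option K,
        hh χ m (fm (nv h3 r) (bv i).1 (bv i).2 / fm ov (bv i).1 (bv i).2) = 0 := by
      have : ∀ i : Option K, fm (nv h3 r) (bv i).1 (bv i).2 / fm ov (bv i).1 (bv i).2 = 1 := by
        intro i
        rw [hr, div_self (ov_isN.fm_ne h3 (bv_ne i))]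
      simp only [this, Finset.sum_const, Finset.card_univ, Fintype.card_option]
      -- `q + 1` is even
      obtain ⟨j, hj⟩ : ∃ j, Fintype.card K + 1 = 2 * j := ⟨(Fintype.card K + 1) / 2, by omega⟩
      rw [hj, mul_nsmul', two_nsmul]
      exact CharTwo.add_self_eq_zero _
    rw [h1, h2, Pi.single_eq_same]
  · have hro : r ≠ o := by rintro rfl; exact hr ho
    rw [Pi.single_eq_of_ne hro, common_perp h3 (nv_isN h3 r) hr, hh_sum h3 hχ (nv_isN h3 r) hr]
    split_ifs
    · rw [add_zero]; exact (CharTwo.add_self_eq_zero _).symm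
    · simp

lemma sup_stable (h3 : Fintype.card K % 4 = 3) (m : ℕ) :
    HStable K (⨆ i : Fin (m + 1), Nk h3 χ i) := by
  intro M hM x hx
  have : (⨆ i : Fin (m + 1), Nk h3 χ i) ≤ (⨆ i : Fin (m + 1), Nk h3 χ i).comap (actF K M) := by
    apply iSup_le
    intro i y hy
    exact (le_iSup (fun i : Fin (m + 1) => Nk h3 χ i) i) (Nk_stable h3 i M hM y hy)
  exact this hx

lemma add_phi_phi_mem (h3 : Fintype.card K % 4 = 3) {m : ℕ} (hχ : GoodChar χ (2 * m + 1))
    (w : Ipts K → F2bar) : w + phi K (phi K w) ∈ ⨆ i : Fin (m + 1), Nk h3 χ i := by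
  set T := ⨆ i : Fin (m + 1), Nk h3 χ i with hT
  have hle : ∀ j, j < m + 1 → Nk h3 χ j ≤ T := fun j hj =>
    le_iSup (fun i : Fin (m + 1) => Nk h3 χ i) ⟨j, hj⟩
  obtain ⟨o, ho⟩ := exists_nv_eq h3 (ov_isN (K := K))
  have hbase : Pi.single o 1 + phi K (phi K (Pi.single o 1)) ∈ T := by
    rw [base_identity h3 hχ ho]
    refine T.add_mem (hle 0 (by omega) (fch_mem h3 0 (Or.inl one_ne_zero))) ?_
    refine T.sum_mem fun j hj => T.sum_mem fun i _ => T.smul_mem _ ?_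
    exact hle (j + 1) (by simpa using hj) (fch_mem h3 _ (bv_ne i))
  have hall : ∀ p : Ipts K, Pi.single p 1 + phi K (phi K (Pi.single p 1)) ∈ T := by
    intro p
    have hpo : borI h3 p o = p := by
      apply nv_inj h3
      obtain ⟨h0, h1⟩ := nv_borI h3 p o
      rw [ho] at h0 h1
      refine isN_of_fst_snd h3 (nv_isN h3 _) (nv_isN h3 p) ?_ ?_
      · rw [h0]; simp [ov]
      · rw [h1]; simp [ov]
    have e : actF K (bor h3 p) (Pi.single o 1) = Pi.single p 1 := by
      ext r
      obtain ⟨r, rfl⟩ := (actI_bij h3 (bor_det h3 p)).2 r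
      rw [bor, actF_apply h3 (bor_det h3 p)]
      by_cases hr : r = o
      · subst hr
        change _ = (Pi.single p 1 : Ipts K → F2bar) (borI h3 p r)
        rw [hpo]; simp
      · rw [Pi.single_eq_of_ne hr, Pi.single_eq_of_ne]
        intro h
        exact hr ((actI_bij h3 (bor_det h3 p)).1 (h.trans hpo.symm))
    have := sup_stable h3 m _ (bor_mem h3 p) _ hbase
    rwa [map_add, bor, ← phi_act h3 (bor_det h3 p), ← phi_act h3 (bor_det h3 p),
      ← bor, e] at this
  have hw : w = ∑ p, w p • (Pi.single p 1 : Ipts K → F2bar) := by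
    ext r
    simp [Finset.sum_apply, Pi.single_apply]
  rw [hw, map_sum, map_sum, ← Finset.sum_add_distrib]
  refine T.sum_mem fun p _ => ?_
  rw [map_smul, map_smul, ← smul_add]
  exact T.smul_mem _ (hall p)

lemma sup_eq_ker (h3 : Fintype.card K % 4 = 3) {m : ℕ} (hχ : GoodChar χ (2 * m + 1)) :
    (⨆ i : Fin (m + 1), Nk h3 χ i) = LinearMap.ker (phi K) := by
  apply le_antisymm
  · exact iSup_le fun i => Nk_le_ker h3 i
  · intro w hw
    have := add_phi_phi_mem h3 hχ w
    rw [LinearMap.mem_ker] at hw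
    rwa [hw, map_zero, add_zero] at this

end Modules

section Structure

variable {K} {χ : MulChar K F2bar} {m : ℕ}

/-! ### Duality between the modules and its consequences -/

/-- The functional `w ↦ pair w f`. -/
def pairL (f : Ipts K → F2bar) : (Ipts K → F2bar) →ₗ[F2bar] F2bar where
  toFun w := pair w f
  map_add' w w' := by simp [pair, add_mul, Finset.sum_add_distrib]
  map_smul' c w := by simp [pair, Finset.mul_sum, mul_assoc]

lemma pairL_apply (w f : Ipts K → F2bar) : pairL f w = pair w f := rfl

lemma pair_smul_right (c : F2bar) (w f : Ipts K → F2bar) : pair w (c • f) = c * pair w f := by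
  simp only [pair, Pi.smul_apply, smul_eq_mul, Finset.mul_sum]
  exact Finset.sum_congr rfl fun p _ => by ring

lemma not_dvd_diff {k k' : ℕ} (hk : k ≤ m) (hk' : k' ≤ m) (h : 0 < k + k') :
    ¬ (2 * m + 1) ∣ k + (2 * m + 1 - 1) * (2 * m + 1 - k') := by
  intro hd
  obtain ⟨l, hl⟩ : ∃ l, 2 * m + 1 = k' + l := ⟨2 * m + 1 - k', by omega⟩
  have h1 : (2 * m + 1) ∣ k + k' := by
    have e : k + k' + (2 * m + 1) * l =
        k + (2 * m + 1 - 1) * (2 * m + 1 - k') + (2 * m + 1) := by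
      rw [show 2 * m + 1 - k' = l by omega, show 2 * m + 1 - 1 = 2 * m by omega]
      linear_combination -hl
    exact (Nat.dvd_add_left (dvd_mul_right _ _)).mp (e ▸ hd.add dvd_rfl)
  have := Nat.le_of_dvd h h1
  omega

lemma pair_diff_zero (h3 : Fintype.card K % 4 = 3) (hχ : GoodChar χ (2 * m + 1)) {k k' : ℕ}
    (hk : k ≤ m) (hk' : k' ≤ m) (h0 : 0 < k + k') {s t u v : K} (h : s * v - u * t ≠ 0) :
    pair (fch h3 χ k s t) (fch h3 χ (2 * m + 1 - k') u v) = 0 := by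
  rw [pair_diff h3 (by omega) hχ h, sum_chi_zero hχ (not_dvd_diff hk hk' h0), mul_zero]

lemma pair_self_one (h3 : Fintype.card K % 4 = 3) (hχ : GoodChar χ (2 * m + 1)) {k : ℕ}
    (hk : k ≤ m) {s t : K} (h : s ≠ 0 ∨ t ≠ 0) :
    pair (fch h3 χ k s t) (fch h3 χ (2 * m + 1 - k) s t) = 1 := by
  rw [pair_same h3 h, sum_chi_one h3 hχ]
  rw [show k + (2 * m + 1 - k) = 2 * m + 1 by omega]

lemma bv_det {i j : Option K} (h : i ≠ j) : (bv i).1 * (bv j).2 - (bv j).1 * (bv i).2 ≠ 0 := by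
  rcases i with _ | i <;> rcases j with _ | j
  · exact absurd rfl h
  · simp [bv]
  · simp [bv]
  · have : i ≠ j := fun e => h (by rw [e])
    simpa [bv, sub_eq_zero] using this

/-- For `0 < k ≤ m` the families `χ(p(ξ))^k` and `χ(p(ξ))^(n-k)`, with `ξ` on the projective line,
are dual to each other. -/
lemma pair_dual (h3 : Fintype.card K % 4 = 3) (hχ : GoodChar χ (2 * m + 1)) {k : ℕ}
    (h0 : 0 < k) (hk : k ≤ m) (i j : Option K) :
    pair (fch h3 χ k (bv i).1 (bv i).2) (fch h3 χ (2 * m + 1 - k) (bv j).1 (bv j).2) =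
      if i = j then 1 else 0 := by
  split_ifs with h
  · subst h
    exact pair_self_one h3 hχ hk (bv_ne i)
  · exact pair_diff_zero h3 hχ hk hk (by omega) (bv_det h)

lemma pair_comb (h3 : Fintype.card K % 4 = 3) (hχ : GoodChar χ (2 * m + 1)) {k : ℕ}
    (h0 : 0 < k) (hk : k ≤ m) (c : Option K → F2bar) (j : Option K) :
    pair (∑ i, c i • fch h3 χ k (bv i).1 (bv i).2)
      (fch h3 χ (2 * m + 1 - k) (bv j).1 (bv j).2) = c j := by
  rw [← pairL_apply, map_sum]
  simp only [map_smul, pairL_apply, pair_dual h3 hχ h0 hk, smul_eq_mul]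
  simp

lemma finrank_Nk (h3 : Fintype.card K % 4 = 3) (hχ : GoodChar χ (2 * m + 1)) {k : ℕ}
    (h0 : 0 < k) (hk : k ≤ m) : Module.finrank F2bar (Nk h3 χ k) = Fintype.card K + 1 := by
  rw [Nk_eq_span, finrank_span_eq_card, Fintype.card_option]
  rw [Fintype.linearIndependent_iff]
  intro c hc j
  rw [← pair_comb h3 hχ h0 hk c j, hc, ← pairL_apply, map_zero]

/-- The pairing of `Nk k` with the functions of exponent `n - k` is nondegenerate on the left. -/
lemma zero_of_orth (h3 : Fintype.card K % 4 = 3) (hχ : GoodChar χ (2 * m + 1)) {k : ℕ}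
    (hk : k ≤ m) {w : Ipts K → F2bar} (hw : w ∈ Nk h3 χ k)
    (h : ∀ s t : K, (s ≠ 0 ∨ t ≠ 0) → pair w (fch h3 χ (2 * m + 1 - k) s t) = 0) : w = 0 := by
  rcases Nat.eq_zero_or_pos k with rfl | h0
  · rw [Nk_zero, Submodule.mem_span_singleton] at hw
    obtain ⟨c, rfl⟩ := hw
    have h1 := h 1 0 (Or.inl one_ne_zero)
    rw [← fch_zero (χ := χ) h3 1 0, ← pairL_apply, map_smul, pairL_apply,
      pair_self_one h3 hχ (Nat.zero_le m) (Or.inl one_ne_zero), smul_eq_mul, mul_one] at h1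
    rw [h1, zero_smul]
  · rw [Nk_eq_span, Submodule.mem_span_range_iff_exists_fun] at hw
    obtain ⟨c, rfl⟩ := hw
    refine Finset.sum_eq_zero fun j _ => ?_
    have := h _ _ (bv_ne j)
    rw [pair_comb h3 hχ h0 hk] at this
    rw [this, zero_smul]

lemma orth (h3 : Fintype.card K % 4 = 3) (hχ : GoodChar χ (2 * m + 1)) {k k' : ℕ}
    (hk : k ≤ m) (hk' : k' ≤ m) (hne : k ≠ k') {u v : K} (huv : u ≠ 0 ∨ v ≠ 0) :
    Nk h3 χ k ≤ LinearMap.ker (pairL (fch h3 χ (2 * m + 1 - k') u v)) := by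
  apply Nk_le
  intro s t hst
  rw [LinearMap.mem_ker, pairL_apply]
  by_cases hd : s * v - u * t = 0
  · obtain ⟨e, rfl, rfl⟩ : ∃ e, u = e * s ∧ v = e * t := by
      by_cases hs : s = 0
      · subst hs
        have ht : t ≠ 0 := by simpa using hst
        have hu : u = 0 := by simpa [ht] using hd
        exact ⟨v / t, by simp [hu], by field_simp⟩
      · exact ⟨u / s, by field_simp, by field_simp; linear_combination hd⟩
    rw [fch_smul, pair_smul_right, pair_same h3 hst, sum_chi_zero hχ, mul_zero]
    intro hdv
    rcases Nat.lt_or_gt_of_ne hne with hlt | hlt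
    · have := Nat.le_of_dvd (by omega) hdv
      omega
    · rw [show k + (2 * m + 1 - k') = (k - k') + (2 * m + 1) by omega,
        Nat.dvd_add_self_right] at hdv
      have := Nat.le_of_dvd (by omega) hdv
      omega
  · exact pair_diff_zero h3 hχ hk hk' (by omega) hd

lemma Nk_indep (h3 : Fintype.card K % 4 = 3) (hχ : GoodChar χ (2 * m + 1)) :
    iSupIndep fun i : Fin (m + 1) => Nk h3 χ i := by
  intro i
  rw [Submodule.disjoint_def]
  intro w hw hw'
  refine zero_of_orth h3 hχ (Nat.lt_succ_iff.mp i.2) hw fun s t hst => ?_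
  have hle : (⨆ (j : Fin (m + 1)) (_ : j ≠ i), Nk h3 χ j) ≤
      LinearMap.ker (pairL (fch h3 χ (2 * m + 1 - i) s t)) :=
    iSup₂_le fun j hj => orth h3 hχ (Nat.lt_succ_iff.mp j.2) (Nat.lt_succ_iff.mp i.2)
      (fun e => hj (Fin.ext e)) hst
  exact hle hw'

lemma fch_ne_zero (h3 : Fintype.card K % 4 = 3) (hχ : GoodChar χ (2 * m + 1)) {k : ℕ}
    (hk : k ≤ m) : fch h3 χ k 1 0 ≠ 0 := by
  intro h
  have := pair_self_one (χ := χ) h3 hχ hk (s := 1) (t := 0) (Or.inl one_ne_zero)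
  rw [h, ← pairL_apply, map_zero] at this
  exact zero_ne_one this

lemma Pop_mem (h3 : Fintype.card K % 4 = 3) {W : Submodule F2bar (Ipts K → F2bar)}
    (hW : HStable K W) (k : ℕ) {w : Ipts K → F2bar} (hw : w ∈ W) : Pop h3 χ k w ∈ W := by
  rw [Pop_apply]
  exact W.sum_mem fun p _ => W.smul_mem _ (hW _ (bor_mem h3 p) _ hw)

/-- A nonzero stable subspace of `Nk k` pairs nontrivially with some function of exponent `n - k`;
after moving the latter to the vector `(1,0)`, the Borel projection produces `fch k 1 0`, whose
translates span `Nk k`. -/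
lemma Nk_simple (h3 : Fintype.card K % 4 = 3) (hχ : GoodChar χ (2 * m + 1)) {k : ℕ}
    (hk : k ≤ m) : HSimple K (Nk h3 χ k) := by
  constructor
  · intro h
    have := fch_mem (χ := χ) h3 k (s := 1) (t := 0) (Or.inl one_ne_zero)
    rw [h, Submodule.mem_bot] at this
    exact fch_ne_zero h3 hχ hk this
  · intro W hWN hW
    by_cases hbot : W = ⊥
    · exact Or.inl hbot
    refine Or.inr (le_antisymm hWN ?_)
    obtain ⟨w, hw, hw0⟩ := Submodule.exists_mem_ne_zero_of_ne_bot hbot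
    obtain ⟨s, t, hst, hp⟩ : ∃ s t : K, (s ≠ 0 ∨ t ≠ 0) ∧
        pair w (fch h3 χ (2 * m + 1 - k) s t) ≠ 0 := by
      by_contra! hc
      exact hw0 (zero_of_orth h3 hχ hk (hWN hw) hc)
    obtain ⟨b, d, hbd⟩ := exists_sl hst
    rw [← pair_act h3 hbd, actF_fch h3 hbd, show d * s - b * t = 1 by linear_combination hbd,
      show -t * s + s * t = 0 by ring] at hp
    have hw1 : actF K (Mh s b t d) w ∈ W := hW _ ⟨s, b, t, d, hbd, rfl⟩ _ hw
    have hP := Pop_mem (χ := χ) h3 hW k hw1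
    rw [Pop_eq h3 hχ (by omega : k ≤ 2 * m + 1)] at hP
    have hf : fch h3 χ k 1 0 ∈ W := (W.smul_mem_iff hp).mp hP
    apply Nk_le
    intro u v huv
    obtain ⟨b, d, hbd⟩ := exists_sl huv
    have hdet : d * u - b * v = 1 := by linear_combination hbd
    have hdet' : d * u - (-b) * (-v) = 1 := by linear_combination hbd
    have := hW _ ⟨d, -b, -v, u, hdet', rfl⟩ _ hf
    change actF K (Mh d (-b) (-v) u) (fch h3 χ k 1 0) ∈ W at this
    rw [actF_fch h3 hdet'] at this
    simpa using this

/-- The image of `fch k 1 0` under an equivariant isomorphism would be fixed by the Borel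
projection of exponent `k`, which vanishes on `Nk k'`. -/
lemma Nk_not_iso (h3 : Fintype.card K % 4 = 3) (hχ : GoodChar χ (2 * m + 1)) {k k' : ℕ}
    (hk : k ≤ m) (hk' : k' ≤ m) (hne : k ≠ k') : ¬ HIso K (Nk h3 χ k) (Nk h3 χ k') := by
  rintro ⟨e, he⟩
  let f : Nk h3 χ k := ⟨fch h3 χ k 1 0, fch_mem h3 k (Or.inl one_ne_zero)⟩
  have hst : ∀ p : Ipts K, actF K (bor h3 p) (f : Ipts K → F2bar) ∈ Nk h3 χ k := fun p =>
    Nk_stable h3 k _ (bor_mem h3 p) _ f.2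
  have hf : f = ∑ p : Ipts K, χ (nv h3 p 0) ^ k •
      (⟨actF K (bor h3 p) (f : Ipts K → F2bar), hst p⟩ : Nk h3 χ k) := by
    apply Subtype.ext
    rw [Submodule.coe_sum]
    simp only [Submodule.coe_smul]
    rw [← Pop_apply, Pop_eq h3 hχ (by omega : k ≤ 2 * m + 1),
      pair_self_one h3 hχ hk (Or.inl one_ne_zero), one_smul]
  have h1 : ((e f : Nk h3 χ k') : Ipts K → F2bar) = Pop h3 χ k (e f : Nk h3 χ k') := by
    conv_lhs => rw [hf]
    rw [map_sum, Submodule.coe_sum, Pop_apply]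
    refine Finset.sum_congr rfl fun p _ => ?_
    rw [map_smul, Submodule.coe_smul, he _ (bor_mem h3 p) f (hst p)]
  have h2 : pair ((e f : Nk h3 χ k') : Ipts K → F2bar) (fch h3 χ (2 * m + 1 - k) 1 0) = 0 :=
    orth h3 hχ hk' hk (Ne.symm hne) (Or.inl one_ne_zero) (e f).2
  rw [Pop_eq h3 hχ (by omega : k ≤ 2 * m + 1), h2, zero_smul] at h1
  have h3' : e f = 0 := Subtype.ext h1
  rw [LinearEquiv.map_eq_zero_iff] at h3'
  exact fch_ne_zero h3 hχ hk (congrArg Subtype.val h3')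

end Structure


/-- If `q ≡ 3 (mod 4)`, then `Ker φ` is the internal direct sum of the
one-dimensional trivial `F[H]`-submodule spanned by the all-one vector `Ĵ`
and `(q-3)/4` pairwise non-isomorphic simple `F[H]`-submodules, each of
dimension `q+1`. -/
theorem ker_phi_decomposition_three (h3 : Fintype.card K % 4 = 3) :
    ∃ Ms : Fin ((Fintype.card K - 3) / 4) → Submodule F2bar (Ipts K → F2bar),
      (∀ M ∈ Hset K, actF K M (Jvec K) = Jvec K) ∧
      Module.finrank F2bar (Submodule.span F2bar {Jvec K}) = 1 ∧
      (∀ i, HStable K (Ms i)) ∧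
      (∀ i, HSimple K (Ms i)) ∧
      (∀ i, Module.finrank F2bar (Ms i) = Fintype.card K + 1) ∧
      (∀ i j, i ≠ j → ¬ HIso K (Ms i) (Ms j)) ∧
      iSupIndep (Fin.cons (Submodule.span F2bar {Jvec K}) Ms) ∧
      (⨆ i, (Fin.cons (Submodule.span F2bar {Jvec K}) Ms :
          Fin ((Fintype.card K - 3) / 4 + 1) → Submodule F2bar (Ipts K → F2bar)) i) =
        LinearMap.ker (phi K) := by
  obtain ⟨χ, hχ⟩ := exists_goodChar h3
  rw [show (Fintype.card K - 1) / 2 = 2 * ((Fintype.card K - 3) / 4) + 1 by omega] at hχ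
  generalize (Fintype.card K - 3) / 4 = m at hχ ⊢
  have hcons : (Fin.cons (Submodule.span F2bar {Jvec K}) (fun i : Fin m => Nk h3 χ (i + 1)) :
      Fin (m + 1) → Submodule F2bar (Ipts K → F2bar)) = fun i : Fin (m + 1) => Nk h3 χ i := by
    funext i
    refine Fin.cases ?_ (fun j => ?_) i
    · rw [Fin.cons_zero, Fin.val_zero, Nk_zero]
    · rw [Fin.cons_succ, Fin.val_succ]
  refine ⟨fun i => Nk h3 χ (i + 1), ?_, ?_, fun i => Nk_stable h3 _,
    fun i => Nk_simple h3 hχ (by omega), fun i => finrank_Nk h3 hχ (by omega) (by omega),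
    fun i j hij => Nk_not_iso h3 hχ (by omega) (by omega) ?_, ?_, ?_⟩
  · rintro M ⟨a, b, c, d, h, rfl⟩
    have := actF_fch (χ := χ) h3 h 0 1 0
    rwa [fch_zero, fch_zero] at this
  · apply finrank_span_singleton
    rw [← fch_zero (χ := χ) h3 1 0]
    exact fch_ne_zero h3 hχ (Nat.zero_le m)
  · intro h
    exact hij (Fin.ext (by omega))
  · rw [hcons]
    exact Nk_indep h3 hχ
  · rw [hcons]
    exact sup_eq_ker h3 hχ

end ConicPaper
end
end

section
/- Ker(φ) = Im(μ), where μ : F^I → F^I is the F-linear map whose matrix with respect to the basis (e_p)_{p∈I} is A^2 + Id (Id the identity matrix and A the incidence matrix of passant lines versus internal points, regarded over F). -/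
/-!
Write `A` for the incidence matrix. Everything follows from `A ^ 3 = A` in characteristic two
(`cube_eq`): it gives `(A ^ 2 + 1) A = 0`, so the image of `μ` lies in the kernel of `φ`, and
conversely a vector `v` with `v A = 0` satisfies `v = v (A ^ 2 + 1)`.

The `(p, r)` entry of `A ^ 3` counts, modulo two, the paths `p ⊥ s ⊥ t ⊥ r` of internal points.
If `p = r`, reversing a path is an involution without fixed points, so the count is even, as is
the entry `0` of `A` (`cube_diag`). If `p ≠ r`, let `c` be the pole of the line `pr`. It is not on
the conic, because an internal point lies on no tangent, so the reflection with center `c` and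
axis `pr` exists; it fixes `p` and `r`, hence acts on the paths, and only the fixed paths matter.
A point is fixed iff it is `c` or lies on `pr`. With `p'` and `r'` the points of `pr` conjugate to
`p` and `r`, the fixed paths are `(s, t) = (c, r')` and `(p', c)`, as far as these points are
internal, and also `(p', r') = (r, p)` when `p ⊥ r`. Up to a common factor `Q(p')` and `Q(r')`
are `Q(p)` and `Q(r)`, whose quotient is a square, so `p'` and `r'` are both internal or both not.
The first two paths thus cancel, and the third gives the entry of `A` (`cube_off_diag`).
-/

open scoped Classical

noncomputable section

namespace ConicPaper

variable (K : Type) [Field K] [Fintype K]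

section Helpers

variable {K}

set_option linter.unusedSectionVars false

/-! ### The bilinear form, cross product and reflections on coordinate vectors -/

/-- The symmetric bilinear form of the conic, normalized so that `bil v v = -2 Q(v)`.
Two points are conjugate under the polarity iff it vanishes on them. -/
def bil (v w : Fin 3 → K) : K := v 0 * w 2 + v 2 * w 0 - 2 * v 1 * w 1

/-- The pole of the line joining `v` and `w`: the cross product of the coordinate
triples of the polar lines of `v` and `w`. -/
def cr (v w : Fin 3 → K) : Fin 3 → K :=
  ![2 * (v 0 * w 1 - v 1 * w 0), v 0 * w 2 - v 2 * w 0, 2 * (v 1 * w 2 - v 2 * w 1)]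

/-- The reflection with center `c`, multiplied by `bil c c` to avoid a division. -/
def scaledRefl (c v : Fin 3 → K) : Fin 3 → K := bil c c • v - (2 * bil v c) • c

lemma bil_comm (v w : Fin 3 → K) : bil v w = bil w v := by
  simp only [bil]; ring

lemma bil_self (v : Fin 3 → K) : bil v v = -2 * Qf K v := by
  simp only [bil, Qf]; ring

lemma bil_cr_left (v w : Fin 3 → K) : bil (cr v w) v = 0 := by
  simp [bil, cr]; ring

lemma bil_cr_right (v w : Fin 3 → K) : bil (cr v w) w = 0 := by
  simp [bil, cr]; ring

lemma Qf_cr (v w : Fin 3 → K) : Qf K (cr v w) = bil v w ^ 2 - 4 * Qf K v * Qf K w := by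
  simp [bil, cr, Qf]; ring

/-- The double cross product formula. -/
lemma cr_cr (v w s : Fin 3 → K) :
    cr (cr v w) s = (2 * bil s v) • w - (2 * bil s w) • v := by
  ext i; fin_cases i <;> simp [bil, cr] <;> ring

lemma bil_smul_left (a : K) (v w : Fin 3 → K) : bil (a • v) w = a * bil v w := by
  simp [bil]; ring

lemma bil_smul_right (a : K) (v w : Fin 3 → K) : bil v (a • w) = a * bil v w := by
  simp [bil]; ring

lemma Qf_smul (a : K) (v : Fin 3 → K) : Qf K (a • v) = a ^ 2 * Qf K v := by
  simp [Qf]; ring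

lemma cr_scaledRefl (c v : Fin 3 → K) : cr (scaledRefl c v) v = (-(2 * bil v c)) • cr c v := by
  ext i; fin_cases i <;> simp [bil, cr, scaledRefl] <;> ring

lemma scaledRefl_scaledRefl (c v : Fin 3 → K) : scaledRefl c (scaledRefl c v) = (bil c c ^ 2) • v := by
  ext i; fin_cases i <;> simp [bil, scaledRefl] <;> ring

lemma scaledRefl_smul (c v : Fin 3 → K) (a : K) : scaledRefl c (a • v) = a • scaledRefl c v := by
  ext i; fin_cases i <;> simp [bil, scaledRefl] <;> ring

lemma bil_scaledRefl (c v w : Fin 3 → K) :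
    bil (scaledRefl c v) (scaledRefl c w) = bil c c ^ 2 * bil v w := by
  simp [bil, scaledRefl]; ring

lemma bil_scaledRefl_of_perp (c v w : Fin 3 → K) (h : bil w c = 0) :
    bil w (scaledRefl c v) = bil c c * bil w v := by
  have : bil w (scaledRefl c v) = bil c c * bil w v - 2 * bil v c * bil w c := by
    simp [bil, scaledRefl]; ring
  rw [this, h]; ring

lemma Qf_scaledRefl (c v : Fin 3 → K) : Qf K (scaledRefl c v) = bil c c ^ 2 * Qf K v := by
  simp [bil, scaledRefl, Qf]; ring

lemma nonsq_sq_mul {a b : K} (ha : a ≠ 0) : Nonsq K (a ^ 2 * b) ↔ Nonsq K b := by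
  unfold Nonsq
  rw [not_iff_not]
  constructor
  · rintro ⟨x, hx⟩
    refine ⟨x / a, ?_⟩
    field_simp
    linear_combination hx
  · rintro ⟨x, rfl⟩
    exact ⟨a * x, by ring⟩

lemma nonsq_mul_nonsq {a b x : K} (ha : Nonsq K a) (hb : Nonsq K b) :
    Nonsq K (x * a) ↔ Nonsq K (x * b) := by
  unfold Nonsq at *
  simp only [← quadraticChar_neg_one_iff_not_isSquare] at *
  rw [map_mul, map_mul, ha, hb]

/-- The tangent to the conic at a point `c` carries no internal point. -/
lemma Qf_ne_zero_of_perp {c p : Fin 3 → K} (hc : c ≠ 0) (hp : Nonsq K (Qf K p))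
    (h : bil c p = 0) : Qf K c ≠ 0 := by
  intro h0
  simp only [bil] at h
  simp only [Qf] at h0
  by_cases h1 : c 0 = 0
  · by_cases h2 : c 2 = 0
    · apply hc
      have h3 : c 1 = 0 := by simpa [h1] using h0
      ext i; fin_cases i <;> simp [h1, h2, h3]
    · apply (nonsq_sq_mul h2).2 hp
      refine ⟨c 2 * p 1 - c 1 * p 2, ?_⟩
      simp only [Qf]
      linear_combination (-c 2 * p 2) * h - p 2 ^ 2 * h0
  · apply (nonsq_sq_mul h1).2 hp
    refine ⟨c 0 * p 1 - c 1 * p 0, ?_⟩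
    simp only [Qf]
    linear_combination (-c 0 * p 0) * h - p 0 ^ 2 * h0

/-! ### Passing between points and coordinate vectors -/

lemma onPerp_iff_s6 (p r : Pt K) : OnPerp K p r ↔ bil p.rep r.rep = 0 := by
  unfold OnPerp perpDot bil
  constructor <;> intro h <;> linear_combination h

lemma onPerp_comm (p r : Pt K) : OnPerp K p r ↔ OnPerp K r p := by
  rw [onPerp_iff_s6, onPerp_iff_s6, bil_comm]

lemma rep_mk (v : Fin 3 → K) (hv : v ≠ 0) :
    ∃ a : K, a ≠ 0 ∧ (Projectivization.mk K v hv).rep = a • v := by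
  obtain ⟨a, ha⟩ := Projectivization.exists_smul_eq_mk_rep K v hv
  exact ⟨a, a.ne_zero, ha.symm⟩

lemma onPerp_mk_right (p : Pt K) (v : Fin 3 → K) (hv : v ≠ 0) :
    OnPerp K p (Projectivization.mk K v hv) ↔ bil p.rep v = 0 := by
  obtain ⟨a, ha, h⟩ := rep_mk v hv
  rw [onPerp_iff_s6, h, bil_smul_right]; simp [ha]

lemma onPerp_mk_left (p : Pt K) (v : Fin 3 → K) (hv : v ≠ 0) :
    OnPerp K (Projectivization.mk K v hv) p ↔ bil v p.rep = 0 := by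
  rw [onPerp_comm, onPerp_mk_right, bil_comm]

lemma internal_mk_s6 (v : Fin 3 → K) (hv : v ≠ 0) :
    Internal K (Projectivization.mk K v hv) ↔ Nonsq K (Qf K v) := by
  obtain ⟨a, ha, h⟩ := rep_mk v hv
  rw [Internal, h, Qf_smul, nonsq_sq_mul ha]

lemma mk_eq_iff (h2 : (2 : K) ≠ 0) (v w : Fin 3 → K) (hv : v ≠ 0) (hw : w ≠ 0) :
    Projectivization.mk K v hv = Projectivization.mk K w hw ↔ cr v w = 0 := by
  rw [Projectivization.mk_eq_mk_iff']
  constructor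
  · rintro ⟨a, rfl⟩
    ext i; fin_cases i <;> simp [cr] <;> ring_nf <;> simp
  · intro h
    have e0 : v 0 * w 1 = v 1 * w 0 := by
      have := congrFun h 0
      simpa [cr, h2, sub_eq_zero] using this
    have e1 : v 0 * w 2 = v 2 * w 0 := by
      have := congrFun h 1
      simpa [cr, h2, sub_eq_zero] using this
    have e2 : v 1 * w 2 = v 2 * w 1 := by
      have := congrFun h 2
      simpa [cr, h2, sub_eq_zero] using this
    obtain ⟨i, hi⟩ := Function.ne_iff.1 hw
    refine ⟨v i / w i, ?_⟩
    have hi' : w i ≠ 0 := hi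
    ext j
    simp only [Pi.smul_apply, smul_eq_mul]
    rw [div_mul_eq_mul_div, div_eq_iff hi']
    fin_cases i <;> fin_cases j <;> simp <;> first | assumption | (symm; assumption)

lemma eq_mk_iff (h2 : (2 : K) ≠ 0) (p : Pt K) (w : Fin 3 → K) (hw : w ≠ 0) :
    p = Projectivization.mk K w hw ↔ cr p.rep w = 0 := by
  rw [← mk_eq_iff h2 _ _ p.rep_nonzero hw, Projectivization.mk_rep]

lemma cr_ne_zero_of_ne (h2 : (2 : K) ≠ 0) {p r : Pt K} (h : p ≠ r) :
    cr p.rep r.rep ≠ 0 := by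
  rw [← Projectivization.mk_rep r, Ne, eq_mk_iff h2] at h
  exact h

lemma cr_eq_zero_comm {v w : Fin 3 → K} (h : cr v w = 0) : cr w v = 0 := by
  have : cr w v = - cr v w := by
    ext i; fin_cases i <;> simp [cr] <;> ring
  rw [this, h, neg_zero]

/-- The pole of the line through two distinct points is the only point conjugate to both. -/
lemma eq_mk_cr_iff (h2 : (2 : K) ≠ 0) (s : Pt K) (v w : Fin 3 → K) (h : cr v w ≠ 0) :
    s = Projectivization.mk K (cr v w) h ↔ bil s.rep v = 0 ∧ bil s.rep w = 0 := by
  constructor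
  · rintro rfl
    obtain ⟨a, ha, e⟩ := rep_mk (cr v w) h
    rw [e, bil_smul_left, bil_smul_left, bil_cr_left, bil_cr_right]
    simp
  · rintro ⟨h1, h3⟩
    rw [eq_mk_iff h2]
    apply cr_eq_zero_comm
    rw [cr_cr, h1, h3]; simp

lemma scaledRefl_ne_zero {c v : Fin 3 → K} (hc : bil c c ≠ 0) (hv : v ≠ 0) : scaledRefl c v ≠ 0 := by
  intro h
  have h1 := scaledRefl_scaledRefl c v
  rw [h] at h1
  have h3 : scaledRefl c (0 : Fin 3 → K) = 0 := by simp [scaledRefl, bil]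
  rw [h3] at h1
  exact (smul_ne_zero (pow_ne_zero 2 hc) hv) h1.symm

/-- The permutation of the internal points induced by the reflection with center `c`. -/
def reflPt (c : Fin 3 → K) (hc : bil c c ≠ 0) (s : Ipts K) : Ipts K :=
  ⟨Projectivization.mk K (scaledRefl c s.1.rep) (scaledRefl_ne_zero hc s.1.rep_nonzero), by
    rw [internal_mk_s6, Qf_scaledRefl, nonsq_sq_mul hc]
    exact s.2⟩

lemma reflPt_invol (c : Fin 3 → K) (hc : bil c c ≠ 0) (s : Ipts K) :
    reflPt c hc (reflPt c hc s) = s := by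
  apply Subtype.ext
  conv_rhs => rw [← Projectivization.mk_rep s.1]
  obtain ⟨a, ha, e⟩ := rep_mk (scaledRefl c s.1.rep) (scaledRefl_ne_zero hc s.1.rep_nonzero)
  simp only [reflPt]
  rw [Projectivization.mk_eq_mk_iff']
  refine ⟨a * bil c c ^ 2, ?_⟩
  rw [e, scaledRefl_smul, scaledRefl_scaledRefl, smul_smul]

/-- The fixed points of a reflection are its center and the points of its axis. -/
lemma reflPt_eq_iff (h2 : (2 : K) ≠ 0) (c : Fin 3 → K) (hc : bil c c ≠ 0) (hc0 : c ≠ 0)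
    (s : Ipts K) :
    reflPt c hc s = s ↔ s.1 = Projectivization.mk K c hc0 ∨ bil s.1.rep c = 0 := by
  rw [Subtype.ext_iff, eq_comm, reflPt, eq_mk_iff h2, eq_mk_iff h2]
  constructor
  · intro h
    have h := cr_eq_zero_comm h
    rw [cr_scaledRefl, smul_eq_zero] at h
    rcases h with h | h
    · right; simpa [h2] using h
    · left; exact cr_eq_zero_comm h
  · intro h
    apply cr_eq_zero_comm
    rw [cr_scaledRefl]
    rcases h with h | h
    · rw [cr_eq_zero_comm h]; simp
    · rw [h]; simp

lemma onPerp_reflPt (c : Fin 3 → K) (hc : bil c c ≠ 0) (s t : Ipts K) :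
    OnPerp K (reflPt c hc s).1 (reflPt c hc t).1 ↔ OnPerp K s.1 t.1 := by
  simp only [reflPt]
  obtain ⟨a, ha, e⟩ := rep_mk (scaledRefl c s.1.rep) (scaledRefl_ne_zero hc s.1.rep_nonzero)
  rw [onPerp_mk_right, onPerp_iff_s6, e, bil_smul_left, bil_scaledRefl]
  simp [ha, hc]

lemma onPerp_reflPt_fixed (c : Fin 3 → K) (hc : bil c c ≠ 0) (p : Pt K)
    (hp : bil p.rep c = 0) (t : Ipts K) :
    OnPerp K p (reflPt c hc t).1 ↔ OnPerp K p t.1 := by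
  simp only [reflPt]
  rw [onPerp_mk_right, onPerp_iff_s6, bil_scaledRefl_of_perp _ _ _ hp]
  simp [hc]

lemma not_onPerp_self (h2 : (2 : K) ≠ 0) (p : Ipts K) : ¬ OnPerp K p.1 p.1 := by
  rw [onPerp_iff_s6, bil_self]
  intro h
  have : Qf K p.1.rep = 0 := by simpa [h2] using h
  exact p.2 ⟨0, by simp [this]⟩

/-- Two distinct points have at most one common conjugate point. -/
lemma eq_of_onPerp (h2 : (2 : K) ≠ 0) {x y a b : Pt K} (hxy : x ≠ y) (hax : OnPerp K a x)
    (hay : OnPerp K a y) (hbx : OnPerp K b x) (hby : OnPerp K b y) : a = b := by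
  rw [onPerp_iff_s6] at *
  rw [(eq_mk_cr_iff h2 a _ _ (cr_ne_zero_of_ne h2 hxy)).2 ⟨hax, hay⟩,
    (eq_mk_cr_iff h2 b _ _ (cr_ne_zero_of_ne h2 hxy)).2 ⟨hbx, hby⟩]

/-! ### Counting modulo two -/

/-- In characteristic two, the sum of a function invariant under an involution is the sum
over the fixed points. -/
lemma sum_eq_sum_fixed {α R : Type*} [Fintype α] [DecidableEq α] [CommRing R] [CharP R 2] (g : α → α)
    (hg : ∀ x, g (g x) = x) (f : α → R) (hf : ∀ x, f (g x) = f x) :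
    ∑ x, f x = ∑ x, if g x = x then f x else 0 := by
  rw [← sub_eq_zero, ← Finset.sum_sub_distrib]
  refine Finset.sum_involution (fun x _ => g x) ?_ ?_ (fun _ _ => Finset.mem_univ _)
    (fun x _ => hg x)
  · intro x _
    by_cases h : g x = x
    · simp [h]
    · have h' : ¬ g (g x) = g x := fun h' => h (by rw [hg] at h'; exact h'.symm)
      simp only [h, h', if_false, sub_zero, hf]
      exact CharTwo.add_self_eq_zero _
  · intro x _ hx h
    exact hx (by simp [h])

lemma sum_pair (a b : Pt K) :
    (∑ x : Ipts K × Ipts K, if x.1.1 = a ∧ x.2.1 = b then (1 : F2bar) else 0)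
      = if Internal K a ∧ Internal K b then 1 else 0 := by
  split_ifs with h
  · rw [Finset.sum_eq_single (⟨a, h.1⟩, ⟨b, h.2⟩)]
    · simp
    · rintro ⟨s, t⟩ _ hne
      rw [if_neg]
      rintro ⟨h1, h3⟩
      exact hne (Prod.ext (Subtype.ext h1) (Subtype.ext h3))
    · simp
  · apply Finset.sum_eq_zero
    rintro ⟨s, t⟩ _
    rw [if_neg]
    rintro ⟨h1, h3⟩
    exact h ⟨by rw [← h1]; exact s.2, by rw [← h3]; exact t.2⟩

lemma cube_apply (p r : Ipts K) :
    (AmatF K ^ 3) p r = ∑ x : Ipts K × Ipts K,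
      if OnPerp K p.1 x.1.1 ∧ OnPerp K x.1.1 x.2.1 ∧ OnPerp K x.2.1 r.1
        then (1 : F2bar) else 0 := by
  rw [pow_succ', pow_two, Matrix.mul_apply, Fintype.sum_prod_type]
  refine Finset.sum_congr rfl fun s _ => ?_
  rw [Matrix.mul_apply, Finset.mul_sum]
  refine Finset.sum_congr rfl fun t _ => ?_
  simp only [AmatF, Matrix.of_apply]
  split_ifs <;> simp_all

/-- A closed path `p ⊥ s ⊥ t ⊥ p` differs from its reversal, so their number is even. -/
lemma cube_diag (h2 : (2 : K) ≠ 0) (p : Ipts K) : (AmatF K ^ 3) p p = 0 := by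
  rw [cube_apply, sum_eq_sum_fixed Prod.swap Prod.swap_swap]
  · apply Finset.sum_eq_zero
    rintro ⟨s, t⟩ _
    split_ifs with h h'
    · exfalso
      have : t = s := (Prod.ext_iff.1 h).1
      subst this
      exact not_onPerp_self h2 t h'.2.1
    · rfl
    · rfl
  · rintro ⟨s, t⟩
    simp only [Prod.swap]
    congr 1
    rw [onPerp_comm p.1 t.1, onPerp_comm t.1 s.1, onPerp_comm s.1 p.1]
    apply propext
    tauto

/-- The fixed paths under the reflection with axis `pr` are two that cancel, together with
`(r, p)` when `p ⊥ r`. -/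
lemma cube_off_diag (h2 : (2 : K) ≠ 0) (p r : Ipts K) (hpr : p ≠ r) :
    (AmatF K ^ 3) p r = if OnPerp K p.1 r.1 then 1 else 0 := by
  have hpr' : p.1 ≠ r.1 := fun h => hpr (Subtype.ext h)
  have hc0 := cr_ne_zero_of_ne h2 hpr'
  obtain ⟨c, hcdef⟩ : ∃ c, c = cr p.1.rep r.1.rep := ⟨_, rfl⟩
  have hcp : bil c p.1.rep = 0 := hcdef ▸ bil_cr_left _ _
  have hcr : bil c r.1.rep = 0 := hcdef ▸ bil_cr_right _ _
  have hpc : bil p.1.rep c = 0 := by rw [bil_comm, hcp]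
  have hrc : bil r.1.rep c = 0 := by rw [bil_comm, hcr]
  rw [← hcdef] at hc0
  have hQc : Qf K c ≠ 0 := Qf_ne_zero_of_perp hc0 p.2 hcp
  have hc : bil c c ≠ 0 := by rw [bil_self]; simp [h2, hQc]
  have hQp : Qf K p.1.rep ≠ 0 := fun h => p.2 ⟨0, by simp [h]⟩
  have hQr : Qf K r.1.rep ≠ 0 := fun h => r.2 ⟨0, by simp [h]⟩
  have h4 : (4 : K) ≠ 0 := by
    have : (4 : K) = 2 * 2 := by norm_num
    rw [this]; exact mul_ne_zero h2 h2
  -- `cr p c` and `cr r c` represent the points `p'` and `r'` of the line `pr` conjugate to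
  -- `p` and `r`.
  have hQp' : Qf K (cr p.1.rep c) = (-4 * Qf K c) * Qf K p.1.rep := by
    rw [Qf_cr, hpc]; ring
  have hQr' : Qf K (cr r.1.rep c) = (-4 * Qf K c) * Qf K r.1.rep := by
    rw [Qf_cr, hrc]; ring
  have hp'0 : cr p.1.rep c ≠ 0 := by
    intro h
    have : Qf K (cr p.1.rep c) = 0 := by rw [h]; simp [Qf]
    rw [hQp'] at this
    simp [h4, hQc, hQp] at this
  have hr'0 : cr r.1.rep c ≠ 0 := by
    intro h
    have : Qf K (cr r.1.rep c) = 0 := by rw [h]; simp [Qf]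
    rw [hQr'] at this
    simp [h4, hQc, hQr] at this
  have hint : Internal K (Projectivization.mk K _ hp'0) ↔
      Internal K (Projectivization.mk K _ hr'0) := by
    rw [internal_mk_s6, internal_mk_s6, hQp', hQr']
    exact nonsq_mul_nonsq p.2 r.2
  have hfix := reflPt_eq_iff h2 c hc hc0
  have hperpc : ∀ s : Pt K, bil s.rep c = 0 ↔ OnPerp K s (Projectivization.mk K c hc0) :=
    fun s => (onPerp_mk_right s c hc0).symm
  have hP := fun s => eq_mk_cr_iff h2 s _ _ hp'0
  have hR := fun s => eq_mk_cr_iff h2 s _ _ hr'0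
  have hCC : ¬ OnPerp K (Projectivization.mk K c hc0) (Projectivization.mk K c hc0) := by
    rw [onPerp_mk_right]
    obtain ⟨a, ha, e⟩ := rep_mk c hc0
    rw [e, bil_smul_left]; exact mul_ne_zero ha hc
  have hpC := (hperpc _).1 hpc
  have hrC := (hperpc _).1 hrc
  simp only [hperpc, ← onPerp_iff_s6] at hfix hP hR
  generalize Projectivization.mk K c hc0 = C at *
  generalize Projectivization.mk K _ hp'0 = P' at *
  generalize Projectivization.mk K _ hr'0 = R' at *
  have hCP : C ≠ P' := fun h => hCC (((hP C).1 h).2)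
  have hCR : C ≠ R' := fun h => hCC (((hR C).1 h).2)
  have key : ∀ s t : Ipts K, (reflPt c hc s = s ∧ reflPt c hc t = t) ∧
      (OnPerp K p.1 s.1 ∧ OnPerp K s.1 t.1 ∧ OnPerp K t.1 r.1) ↔
      (s.1 = C ∧ t.1 = R') ∨ (s.1 = P' ∧ t.1 = C) ∨
        ((s.1 = P' ∧ t.1 = R') ∧ OnPerp K p.1 r.1) := by
    intro s t
    rw [hfix, hfix]
    constructor
    · rintro ⟨⟨hs | hs, ht | ht⟩, h1, h3, h5⟩
      · rw [hs, ht] at h3; exact absurd h3 hCC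
      · exact Or.inl ⟨hs, (hR _).2 ⟨h5, ht⟩⟩
      · exact Or.inr (Or.inl ⟨(hP _).2 ⟨(onPerp_comm _ _).1 h1, hs⟩, ht⟩)
      · -- Both `t` and `p` are conjugate to `s` and to the center, hence equal.
        have hsC : s.1 ≠ C := fun h => hCC (h ▸ hs)
        have htp : t.1 = p.1 :=
          eq_of_onPerp h2 hsC ((onPerp_comm _ _).1 h3) ht h1 hpC
        exact Or.inr (Or.inr ⟨⟨(hP _).2 ⟨(onPerp_comm _ _).1 h1, hs⟩,
          (hR _).2 ⟨h5, ht⟩⟩, htp ▸ h5⟩)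
    · rintro (⟨hs, ht⟩ | ⟨hs, ht⟩ | ⟨⟨hs, ht⟩, h⟩)
      · obtain ⟨h1, h3⟩ := (hR _).1 ht
        refine ⟨⟨Or.inl hs, Or.inr h3⟩, ?_, ?_, h1⟩
        · rw [hs]; exact hpC
        · rw [hs, onPerp_comm]; exact h3
      · obtain ⟨h1, h3⟩ := (hP _).1 hs
        refine ⟨⟨Or.inr h3, Or.inl ht⟩, (onPerp_comm _ _).1 h1, ?_, ?_⟩
        · rw [ht]; exact h3
        · rw [ht, onPerp_comm]; exact hrC
      · have hr : r.1 = P' := (hP _).2 ⟨(onPerp_comm _ _).1 h, hrC⟩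
        have hp : p.1 = R' := (hR _).2 ⟨h, hpC⟩
        rw [hs, ht, ← hr, ← hp]
        exact ⟨⟨Or.inr hrC, Or.inr hpC⟩, h, (onPerp_comm _ _).1 h, h⟩
  rw [cube_apply, sum_eq_sum_fixed (fun x => (reflPt c hc x.1, reflPt c hc x.2))
    (fun x => by simp only [reflPt_invol])]
  swap
  · rintro ⟨s, t⟩
    simp only [onPerp_reflPt, onPerp_reflPt_fixed c hc p.1 hpc,
      onPerp_comm _ r.1, onPerp_reflPt_fixed c hc r.1 hrc]
  have split : ∀ x : Ipts K × Ipts K,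
      (if (reflPt c hc x.1, reflPt c hc x.2) = x then
        (if OnPerp K p.1 x.1.1 ∧ OnPerp K x.1.1 x.2.1 ∧ OnPerp K x.2.1 r.1
          then (1 : F2bar) else 0) else 0) =
      (if x.1.1 = C ∧ x.2.1 = R' then 1 else 0) + (if x.1.1 = P' ∧ x.2.1 = C then 1 else 0) +
        (if x.1.1 = P' ∧ x.2.1 = R' then 1 else 0) * (if OnPerp K p.1 r.1 then 1 else 0) := by
    rintro ⟨s, t⟩
    rw [← ite_and]
    simp only [Prod.mk.injEq, key s t]
    by_cases hs : s.1 = C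
    · by_cases ht : t.1 = R' <;> simp [hs, ht, hCP]
    · by_cases ht : t.1 = C
      · simp [hs, ht, hCR]
      · simp [hs, ht, ite_and]
        split_ifs <;> simp_all
  rw [Finset.sum_congr rfl fun x _ => split x, Finset.sum_add_distrib, Finset.sum_add_distrib,
    ← Finset.sum_mul, sum_pair, sum_pair, sum_pair]
  simp only [hint, and_comm (a := Internal K C), and_self]
  rw [CharTwo.add_self_eq_zero, zero_add]
  by_cases h : OnPerp K p.1 r.1
  · -- If `p ⊥ r` then `r' = p`, which is internal.
    have hp : p.1 = R' := (hR _).2 ⟨h, hpC⟩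
    have hR' : Internal K R' := hp ▸ p.2
    simp [h, hR']
  · simp [h]

/-- The number of paths `p ⊥ s ⊥ t ⊥ r` is odd exactly when `p ⊥ r`. -/
lemma cube_eq (h2 : (2 : K) ≠ 0) : AmatF K ^ 3 = AmatF K := by
  ext p r
  by_cases h : p = r
  · subst h
    rw [cube_diag h2]
    simp [AmatF, not_onPerp_self h2]
  · rw [cube_off_diag h2 p r h]; rfl

end Helpers

/-- `Ker(φ) = Im(μ)`, where `μ` has matrix `A^2 + Id`. -/
theorem ker_phi_eq_range_mu (hq : Odd (Fintype.card K)) :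
    LinearMap.ker (phi K) =
      LinearMap.range (Matrix.vecMulLinear (AmatF K ^ 2 + 1)) := by
  have h2 : (2 : K) ≠ 0 := by
    apply Ring.two_ne_zero
    rw [Ne, FiniteField.even_card_iff_char_two]
    have := Nat.odd_iff.1 hq
    omega
  have h3 := cube_eq (K := K) h2
  ext v
  rw [LinearMap.mem_ker, LinearMap.mem_range]
  simp only [phi, Matrix.vecMulLinear_apply]
  constructor
  · intro h
    refine ⟨v, ?_⟩
    rw [Matrix.vecMul_add, Matrix.vecMul_one, pow_two, ← Matrix.vecMul_vecMul, h,
      Matrix.zero_vecMul, zero_add]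
  · rintro ⟨w, rfl⟩
    rw [Matrix.vecMul_vecMul, add_mul, one_mul, ← pow_succ, h3]
    ext i
    simp only [Matrix.vecMul_add, Pi.add_apply, Pi.zero_apply]
    exact CharTwo.add_self_eq_zero _

end ConicPaper
end
end
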